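/- arXiv:2410.19270 — 2 statements merged into one kernel-verified Lean document; each statement's English description precedes it below -/
import Mathlib

section
/- Let H and K be complex separable Hilbert spaces and let Φ: T(H) → T(K) be a quantum channel. Then Φ admits a Holevo form, i.e. Φ(X) = Σ_{k=1}^∞ Tr(F_k X) R_k for some states R_k ∈ S(K) and positive operators F_k ∈ B(H) with Σ_{k=1}^∞ F_k = I_H, if and only if Φ admits an operator-sum representation by rank-one operations, i.e. Φ(X) = Σ_{k=1}^∞ (⟨v_k, X v_k⟩) u_k u_k* for some unit vectors {u_k} ⊆ K and vectors {v_k} ⊆ H with Σ_{k=1}^∞ v_k v_k* = I_H (sum in the strong operator topology). -/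
noncomputable section

open scoped ComplexInnerProductSpace
open ContinuousLinearMap Filter Topology

/-- The rank-one operator `u v*`, i.e. `x ↦ ⟪v, x⟫ • u`. -/
def rankOne {H K : Type*} [NormedAddCommGroup H] [InnerProductSpace ℂ H]
    [NormedAddCommGroup K] [InnerProductSpace ℂ K] (u : K) (v : H) : H →L[ℂ] K :=
  (ContinuousLinearMap.toSpanSingleton ℂ u).comp (innerSL ℂ v)

/-- An operator is trace class iff the sums `∑ |⟪f i, T (e i)⟫|` over finite orthonormal
families are uniformly bounded (the supremum being the trace norm). -/
def IsTraceClass {H K : Type*} [NormedAddCommGroup H] [InnerProductSpace ℂ H]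
    [NormedAddCommGroup K] [InnerProductSpace ℂ K] (T : H →L[ℂ] K) : Prop :=
  ∃ C : ℝ, ∀ (n : ℕ) (e : Fin n → H) (f : Fin n → K),
    Orthonormal ℂ e → Orthonormal ℂ f → (∑ i, ‖⟪f i, T (e i)⟫‖) ≤ C

/-- The trace norm of an operator. -/
def traceNorm {H K : Type*} [NormedAddCommGroup H] [InnerProductSpace ℂ H]
    [NormedAddCommGroup K] [InnerProductSpace ℂ K] (T : H →L[ℂ] K) : ℝ :=
  sSup { r : ℝ | ∃ (n : ℕ) (e : Fin n → H) (f : Fin n → K),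
    Orthonormal ℂ e ∧ Orthonormal ℂ f ∧ r = ∑ i, ‖⟪f i, T (e i)⟫‖ }

/-- A fixed Hilbert basis of a Hilbert space. -/
def stdONB (H : Type*) [NormedAddCommGroup H] [InnerProductSpace ℂ H] [CompleteSpace H] :
    HilbertBasis (exists_hilbertBasis ℂ H).choose ℂ H :=
  (exists_hilbertBasis ℂ H).choose_spec.choose

/-- The trace of a (trace-class) operator. -/
def Tr {H : Type*} [NormedAddCommGroup H] [InnerProductSpace ℂ H] [CompleteSpace H]
    (T : H →L[ℂ] H) : ℂ :=
  ∑' i, ⟪stdONB H i, T (stdONB H i)⟫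

/-- Convergence of a series of operators in trace norm. -/
def HasSumTN {H K : Type*} [NormedAddCommGroup H] [InnerProductSpace ℂ H]
    [NormedAddCommGroup K] [InnerProductSpace ℂ K] {ι : Type*}
    (f : ι → (H →L[ℂ] K)) (T : H →L[ℂ] K) : Prop :=
  Filter.Tendsto (fun s : Finset ι => traceNorm (T - ∑ k ∈ s, f k)) Filter.atTop (nhds 0)

/-- A state: a positive trace-class operator with trace one. -/
def IsState {H : Type*} [NormedAddCommGroup H] [InnerProductSpace ℂ H] [CompleteSpace H]
    (ρ : H →L[ℂ] H) : Prop :=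
  IsTraceClass ρ ∧ ρ.IsPositive ∧ Tr ρ = 1

/-- Positivity of a finite matrix of operators, viewed as a block operator. -/
def MatPos {H : Type*} [NormedAddCommGroup H] [InnerProductSpace ℂ H] {n : ℕ}
    (M : Fin n → Fin n → (H →L[ℂ] H)) : Prop :=
  ∀ x : Fin n → H,
    0 ≤ (∑ i, ∑ j, ⟪x i, M i j (x j)⟫).re ∧ (∑ i, ∑ j, ⟪x i, M i j (x j)⟫).im = 0

/-- Complete positivity of a linear map on trace-class operators. -/
def IsCompletelyPositive {H K : Type*} [NormedAddCommGroup H] [InnerProductSpace ℂ H]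
    [NormedAddCommGroup K] [InnerProductSpace ℂ K]
    (Φ : (H →L[ℂ] H) →ₗ[ℂ] (K →L[ℂ] K)) : Prop :=
  ∀ (n : ℕ) (M : Fin n → Fin n → (H →L[ℂ] H)),
    (∀ i j, IsTraceClass (M i j)) → MatPos M → MatPos fun i j => Φ (M i j)

/-- A quantum channel: a completely positive trace-preserving linear map on
trace-class operators. -/
structure IsChannel {H K : Type*} [NormedAddCommGroup H] [InnerProductSpace ℂ H]
    [CompleteSpace H] [NormedAddCommGroup K] [InnerProductSpace ℂ K] [CompleteSpace K]
    (Φ : (H →L[ℂ] H) →ₗ[ℂ] (K →L[ℂ] K)) : Prop where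
  maps_traceClass : ∀ X : H →L[ℂ] H, IsTraceClass X → IsTraceClass (Φ X)
  completelyPositive : IsCompletelyPositive Φ
  tracePreserving : ∀ X : H →L[ℂ] H, IsTraceClass X → Tr (Φ X) = Tr X

/-- Strongly entanglement breaking channel: admits a Holevo (measure-and-prepare) form
`Φ(X) = ∑ₖ Tr(Fₖ X) Rₖ` with states `Rₖ` and positive `Fₖ` with `∑ₖ Fₖ = I` (SOT). -/
def IsSEB {H K : Type*} [NormedAddCommGroup H] [InnerProductSpace ℂ H] [CompleteSpace H]
    [NormedAddCommGroup K] [InnerProductSpace ℂ K] [CompleteSpace K]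
    (Φ : (H →L[ℂ] H) →ₗ[ℂ] (K →L[ℂ] K)) : Prop :=
  ∃ (R : ℕ → (K →L[ℂ] K)) (F : ℕ → (H →L[ℂ] H)),
    (∀ k, IsState (R k)) ∧ (∀ k, (F k).IsPositive) ∧
    (∀ x : H, HasSum (fun k => F k x) x) ∧
    ∀ X : H →L[ℂ] H, IsTraceClass X → HasSumTN (fun k => Tr (F k * X) • R k) (Φ X)

/-- The weak* topology on `B(H)`, induced by the pairing with trace-class operators. -/
def weakStarTopology (H : Type*) [NormedAddCommGroup H] [InnerProductSpace ℂ H]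
    [CompleteSpace H] : TopologicalSpace (H →L[ℂ] H) :=
  TopologicalSpace.induced
    (fun Y => fun X : { X : H →L[ℂ] H // IsTraceClass X } => Tr ((X : H →L[ℂ] H) * Y))
    inferInstance



/-! ### Helper lemmas -/

/-- A Parseval frame. -/
def IsPF {H : Type*} [NormedAddCommGroup H] [InnerProductSpace ℂ H] {ι : Type*}
    (v : ι → H) : Prop :=
  ∀ x : H, HasSum (fun n => ‖⟪v n, x⟫‖ ^ 2) (‖x‖ ^ 2)

theorem hasSum_prod_nonneg {α β : Type*} {f : α × β → ℝ} (hf : ∀ p, 0 ≤ f p) {g : α → ℝ} {t : ℝ}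
    (h1 : ∀ a, HasSum (fun b => f (a, b)) (g a)) (h2 : HasSum g t) : HasSum f t := by
  have hs : Summable f := by
    rw [summable_prod_of_nonneg (fun p => hf p)]
    refine ⟨fun a => (h1 a).summable, ?_⟩
    have : (fun a => ∑' b, f (a, b)) = g := funext fun a => (h1 a).tsum_eq
    rw [this]; exact h2.summable
  have := hs.hasSum.prod_fiberwise h1
  rw [h2.unique this]; exact hs.hasSum

section
variable {H : Type*} [NormedAddCommGroup H] [InnerProductSpace ℂ H]

theorem inner_mul_symm_ofReal (x v : H) :
    ((‖⟪v, x⟫‖ ^ 2 : ℝ) : ℂ) = ⟪x, v⟫ * ⟪v, x⟫ := by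
  rw [← inner_conj_symm x v, Complex.conj_mul']
  push_cast; rfl

theorem pf_of_inner {ι : Type*} {v : ι → H} {x : H}
    (h : HasSum (fun n => ⟪x, v n⟫ * ⟪v n, x⟫) ⟪x, x⟫) :
    HasSum (fun n => ‖⟪v n, x⟫‖ ^ 2) (‖x‖ ^ 2) := by
  rw [← Complex.hasSum_ofReal]
  convert h using 1
  · funext n
    rw [inner_mul_symm_ofReal]
  · rw [inner_self_eq_norm_sq_to_K]; simp

theorem HilbertBasis.isPF {ι : Type*} (b : HilbertBasis ι ℂ H) : IsPF (fun i => b i) :=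
  fun x => pf_of_inner (b.hasSum_inner_mul_inner x x)

theorem IsPF.inner {ι : Type*} {v : ι → H} (hv : IsPF v) (y x : H) :
    HasSum (fun n => ⟪y, v n⟫ * ⟪v n, x⟫) ⟪y, x⟫ := by
  have key : ∀ n, ⟪y, v n⟫ * ⟪v n, x⟫ = ⟪(⟪v n, y⟫ : ℂ), (⟪v n, x⟫ : ℂ)⟫ := by
    intro n
    rw [RCLike.inner_apply, inner_conj_symm, mul_comm]
  simp_rw [key]
  rw [inner_eq_sum_norm_sq_div_four (𝕜 := ℂ) y x]
  simp_rw [inner_eq_sum_norm_sq_div_four (𝕜 := ℂ) (⟪v _, y⟫ : ℂ) (⟪v _, x⟫ : ℂ)]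
  have h : ∀ z : H, HasSum (fun n => ((‖⟪v n, z⟫‖ : ℂ)) ^ 2) ((‖z‖ : ℂ) ^ 2) := by
    intro z
    have := (Complex.hasSum_ofReal).2 (hv z)
    simpa using this
  have h1 := h (y + x)
  have h2 := h (y - x)
  have h3 := (h (y - (Complex.I) • x)).mul_right Complex.I
  have h4 := (h (y + (Complex.I) • x)).mul_right Complex.I
  have := (((h1.sub h2).add (h3.sub h4)).div_const 4)
  simp only [inner_add_right, inner_sub_right, inner_smul_right] at this
  simpa [sub_mul] using this

theorem IsPF.norm_sum_sq_le {ι : Type*} {v : ι → H} (hv : IsPF v) (c : ι → ℂ) (s : Finset ι) :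
    ‖∑ n ∈ s, c n • v n‖ ^ 2 ≤ ∑ n ∈ s, ‖c n‖ ^ 2 := by
  set z := ∑ n ∈ s, c n • v n with hz
  have h1 : ‖z‖ ^ 2 ≤ ∑ n ∈ s, ‖c n‖ * ‖⟪v n, z⟫‖ := by
    have : ‖z‖ ^ 2 = ‖⟪z, z⟫‖ := by
      rw [inner_self_eq_norm_sq_to_K]; simp
    rw [this]
    conv_lhs => rw [hz, sum_inner]
    refine (norm_sum_le _ _).trans (Finset.sum_le_sum fun n _ => ?_)
    rw [inner_smul_left, norm_mul, ← hz]; simp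
  have h2 := Finset.sum_mul_sq_le_sq_mul_sq s (fun n => ‖c n‖) (fun n => ‖⟪v n, z⟫‖)
  have h3 : ∑ n ∈ s, ‖⟪v n, z⟫‖ ^ 2 ≤ ‖z‖ ^ 2 :=
    sum_le_hasSum s (fun _ _ => by positivity) (hv z)
  have h0 : 0 ≤ ∑ n ∈ s, ‖c n‖ ^ 2 := Finset.sum_nonneg fun _ _ => by positivity
  have h4 : (‖z‖ ^ 2) ^ 2 ≤ (∑ n ∈ s, ‖c n‖ ^ 2) * ‖z‖ ^ 2 :=
    (pow_le_pow_left₀ (by positivity) h1 2).trans (h2.trans (by gcongr))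
  rcases eq_or_lt_of_le (sq_nonneg ‖z‖) with h | h
  · rw [← h]; exact h0
  · rw [sq (‖z‖ ^ 2)] at h4
    exact le_of_mul_le_mul_right h4 h

theorem IsPF.hasSum [CompleteSpace H] {ι : Type*} {v : ι → H} (hv : IsPF v) (x : H) :
    HasSum (fun n => ⟪v n, x⟫ • v n) x := by
  have hs : Summable (fun n => ⟪v n, x⟫ • v n) := by
    rw [summable_iff_vanishing_norm]
    intro ε hε
    obtain ⟨s, hs⟩ := summable_iff_vanishing_norm.1 (hv x).summable (ε ^ 2) (by positivity)
    refine ⟨s, fun t ht => ?_⟩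
    have h1 := hs t ht
    have h2 := hv.norm_sum_sq_le (fun n => ⟪v n, x⟫) t
    rw [Real.norm_of_nonneg (Finset.sum_nonneg fun _ _ => by positivity)] at h1
    exact lt_of_pow_lt_pow_left₀ 2 hε.le (h2.trans_lt h1)
  obtain ⟨L, hL⟩ := hs
  have : L = x := by
    refine ext_inner_left ℂ fun y => ?_
    have h1 := hL.mapL (innerSL ℂ y)
    simp only [innerSL_apply_apply, inner_smul_right] at h1
    refine h1.unique ?_
    simpa [mul_comm] using hv.inner y x
  rwa [this] at hL

variable [CompleteSpace H]

theorem hs_swap {ι κ : Type*} (S : H →L[ℂ] H) (w : ι → H) (e : κ → H) {t : ℝ}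
    (h1 : ∀ i, HasSum (fun j => ‖⟪e j, S (w i)⟫‖ ^ 2) (‖S (w i)‖ ^ 2))
    (h2 : ∀ j, HasSum (fun i => ‖⟪w i, adjoint S (e j)⟫‖ ^ 2) (‖adjoint S (e j)‖ ^ 2))
    (h : HasSum (fun j => ‖adjoint S (e j)‖ ^ 2) t) :
    HasSum (fun i => ‖S (w i)‖ ^ 2) t := by
  have h3 : HasSum (fun p : κ × ι => ‖⟪w p.2, adjoint S (e p.1)⟫‖ ^ 2) t :=
    hasSum_prod_nonneg (fun _ => by positivity) h2 h
  rw [← (Equiv.prodComm ι κ).hasSum_iff] at h3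
  refine h3.prod_fiberwise fun i => ?_
  convert h1 i using 4 with j
  rw [Function.comp]
  simp only [Equiv.prodComm_apply, Prod.snd_swap, Prod.fst_swap]
  rw [adjoint_inner_right, norm_inner_symm]

theorem mul_le_sq_add_sq (a b : ℝ) : a * b ≤ a ^ 2 + b ^ 2 := by
  nlinarith [sq_nonneg (a - b), sq_nonneg a, sq_nonneg b]

theorem hs_cyc {ι κ : Type*} (A B : H →L[ℂ] H) {w : ι → H} {e : κ → H}
    (hw : IsPF w) (he : IsPF e)
    (hA : Summable (fun i => ‖A (w i)‖ ^ 2)) (hB : Summable (fun i => ‖B (w i)‖ ^ 2)) :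
    ∃ t : ℂ, HasSum (fun i => ⟪A (w i), B (w i)⟫) t ∧
      HasSum (fun j => ⟪adjoint B (e j), adjoint A (e j)⟫) t := by
  have hA' := hasSum_prod_nonneg (f := fun p : ι × κ => ‖⟪e p.2, A (w p.1)⟫‖ ^ 2)
    (fun _ => by positivity) (fun i => he (A (w i))) hA.hasSum
  have hB' := hasSum_prod_nonneg (f := fun p : ι × κ => ‖⟪e p.2, B (w p.1)⟫‖ ^ 2)
    (fun _ => by positivity) (fun i => he (B (w i))) hB.hasSum
  have hs : Summable (fun p : ι × κ => ⟪A (w p.1), e p.2⟫ * ⟪e p.2, B (w p.1)⟫) := by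
    refine Summable.of_norm_bounded (hA'.summable.add hB'.summable) fun p => ?_
    rw [norm_mul, norm_inner_symm]
    exact mul_le_sq_add_sq _ _
  refine ⟨_, hs.hasSum.prod_fiberwise fun i => he.inner (A (w i)) (B (w i)), ?_⟩
  have h3 := hs.hasSum
  rw [← (Equiv.prodComm κ ι).hasSum_iff] at h3
  refine h3.prod_fiberwise fun j => ?_
  convert hw.inner (adjoint B (e j)) (adjoint A (e j)) using 2 with i
  simp only [Function.comp, Equiv.prodComm_apply, Prod.snd_swap, Prod.fst_swap]
  rw [adjoint_inner_left, adjoint_inner_right, mul_comm]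

end

section
variable {H : Type*} [NormedAddCommGroup H] [InnerProductSpace ℂ H]
variable {K : Type*} [NormedAddCommGroup K] [InnerProductSpace ℂ K]

theorem IsTraceClass.add {S T : H →L[ℂ] K} (hS : IsTraceClass S) (hT : IsTraceClass T) :
    IsTraceClass (S + T) := by
  obtain ⟨C, hC⟩ := hS
  obtain ⟨D, hD⟩ := hT
  refine ⟨C + D, fun n e f he hf => ?_⟩
  refine le_trans ?_ (add_le_add (hC n e f he hf) (hD n e f he hf))
  rw [← Finset.sum_add_distrib]
  refine Finset.sum_le_sum fun i _ => ?_
  rw [add_apply, inner_add_right]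
  exact norm_add_le _ _

theorem IsTraceClass.smul {T : H →L[ℂ] K} (hT : IsTraceClass T) (c : ℂ) :
    IsTraceClass (c • T) := by
  obtain ⟨D, hD⟩ := hT
  refine ⟨‖c‖ * D, fun n e f he hf => ?_⟩
  refine le_trans (le_of_eq ?_) (mul_le_mul_of_nonneg_left (hD n e f he hf) (norm_nonneg c))
  rw [Finset.mul_sum]
  refine Finset.sum_congr rfl fun i _ => ?_
  rw [smul_apply, inner_smul_right, norm_mul]

theorem IsTraceClass.neg {T : H →L[ℂ] K} (hT : IsTraceClass T) : IsTraceClass (-T) := by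
  have := hT.smul (-1)
  rwa [neg_one_smul] at this

theorem IsTraceClass.sub {S T : H →L[ℂ] K} (hS : IsTraceClass S) (hT : IsTraceClass T) :
    IsTraceClass (S - T) := by
  rw [sub_eq_add_neg]; exact hS.add hT.neg

theorem IsTraceClass.zero : IsTraceClass (0 : H →L[ℂ] K) :=
  ⟨0, fun n e f _ _ => by simp⟩

theorem IsTraceClass.sum {ι : Type*} (s : Finset ι) (f : ι → (H →L[ℂ] K))
    (h : ∀ k, IsTraceClass (f k)) : IsTraceClass (∑ k ∈ s, f k) := by
  classical
  induction s using Finset.induction_on with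
  | empty => simpa using IsTraceClass.zero
  | insert a s ha ih => rw [Finset.sum_insert ha]; exact (h a).add ih

theorem IsTraceClass.adj [CompleteSpace H] {T : H →L[ℂ] H} (hT : IsTraceClass T) :
    IsTraceClass (adjoint T) := by
  obtain ⟨D, hD⟩ := hT
  refine ⟨D, fun n e f he hf => ?_⟩
  refine le_trans (le_of_eq ?_) (hD n f e hf he)
  refine Finset.sum_congr rfl fun i _ => ?_
  rw [adjoint_inner_right, norm_inner_symm]

theorem bddAbove_of_traceClass {T : H →L[ℂ] K} (hT : IsTraceClass T) :
    BddAbove { r : ℝ | ∃ (n : ℕ) (e : Fin n → H) (f : Fin n → K),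
      Orthonormal ℂ e ∧ Orthonormal ℂ f ∧ r = ∑ i, ‖⟪f i, T (e i)⟫‖ } := by
  obtain ⟨D, hD⟩ := hT
  refine ⟨D, ?_⟩
  rintro r ⟨n, e, f, he, hf, rfl⟩
  exact hD n e f he hf

theorem norm_inner_le_traceNorm {T : H →L[ℂ] K} (hT : IsTraceClass T) (x : K) (y : H) :
    ‖⟪x, T y⟫‖ ≤ traceNorm T * (‖x‖ * ‖y‖) := by
  by_cases hx : x = 0
  · simp [hx]
  by_cases hy : y = 0
  · simp [hy]
  have hx' : ‖x‖ ≠ 0 := by simpa using hx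
  have hy' : ‖y‖ ≠ 0 := by simpa using hy
  have key : ‖⟪((‖x‖ : ℂ)⁻¹) • x, T (((‖y‖ : ℂ)⁻¹) • y)⟫‖ ≤ traceNorm T := by
    refine le_csSup (bddAbove_of_traceClass hT)
      ⟨1, fun _ => ((‖y‖ : ℂ)⁻¹) • y, fun _ => ((‖x‖ : ℂ)⁻¹) • x, ?_, ?_, by simp⟩
    · refine ⟨fun i => ?_, fun i j hij => (hij (Subsingleton.elim i j)).elim⟩
      rw [norm_smul]; simp [hy]
    · refine ⟨fun i => ?_, fun i j hij => (hij (Subsingleton.elim i j)).elim⟩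
      rw [norm_smul]; simp [hx]
  rw [map_smul, inner_smul_left, inner_smul_right, norm_mul, norm_mul] at key
  simp only [map_inv₀, Complex.conj_ofReal, norm_inv, Complex.norm_real, norm_norm] at key
  have hp : 0 < ‖x‖ * ‖y‖ := by positivity
  rw [← div_le_iff₀ hp]
  refine le_trans (le_of_eq ?_) key
  field_simp

theorem HasSumTN.weak {ι : Type*} {f : ι → (H →L[ℂ] K)} {T : H →L[ℂ] K}
    (hT : IsTraceClass T) (hf : ∀ k, IsTraceClass (f k)) (h : HasSumTN f T) (x : K) (y : H) :
    HasSum (fun k => ⟪x, f k y⟫) ⟪x, T y⟫ := by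
  unfold HasSumTN at h
  rw [HasSum, SummationFilter.unconditional_filter, tendsto_iff_norm_sub_tendsto_zero]
  have h2 := h.mul_const (‖x‖ * ‖y‖)
  rw [zero_mul] at h2
  refine squeeze_zero (fun _ => norm_nonneg _) (fun s => ?_) h2
  refine le_trans (le_of_eq ?_)
    (norm_inner_le_traceNorm (hT.sub (IsTraceClass.sum s f hf)) x y)
  rw [norm_sub_rev, sub_apply, inner_sub_right, sum_apply, inner_sum]

theorem sum_rankOne_le {n : ℕ} {e : Fin n → H} {f : Fin n → K} (he : Orthonormal ℂ e)
    (hf : Orthonormal ℂ f) (u : K) (v : H) (hu : ‖u‖ = 1) (hv : ‖v‖ = 1) :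
    ∑ i, ‖⟪f i, u⟫‖ * ‖⟪v, e i⟫‖ ≤ 1 := by
  have h2 := Finset.sum_mul_sq_le_sq_mul_sq Finset.univ (fun i => ‖⟪f i, u⟫‖)
    (fun i => ‖⟪v, e i⟫‖)
  have h3 := hf.sum_inner_products_le u (s := Finset.univ)
  have h4 := he.sum_inner_products_le v (s := Finset.univ)
  simp_rw [norm_inner_symm (e _) v] at h4
  rw [hu] at h3
  rw [hv] at h4
  have h5 : (∑ i, ‖⟪f i, u⟫‖ ^ 2) * (∑ i, ‖⟪v, e i⟫‖ ^ 2) ≤ (1 ^ 2) * (1 ^ 2) :=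
    mul_le_mul h3 h4 (Finset.sum_nonneg fun _ _ => by positivity) (by norm_num)
  have h6 := h2.trans h5
  refine (abs_le_one_iff_mul_self_le_one.2 ?_ |> le_of_abs_le)
  nlinarith

theorem hasSumTN_of_weak {u : ℕ → K} (hu : ∀ k, ‖u k‖ = 1) {a : ℕ → ℂ}
    (ha : Summable fun k => ‖a k‖) {T : K →L[ℂ] K}
    (hT : ∀ x y, HasSum (fun k => a k * (⟪x, u k⟫ * ⟪u k, y⟫)) ⟪x, T y⟫) :
    HasSumTN (fun k => a k • rankOne (u k) (u k)) T := by
  have hlim := tendsto_tsum_compl_atTop_zero (fun k => ‖a k‖)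
  refine squeeze_zero (fun s => ?_) (fun s => ?_) hlim
  · refine Real.sSup_nonneg ?_
    rintro r ⟨n, e, f, he, hf, rfl⟩
    exact Finset.sum_nonneg fun _ _ => norm_nonneg _
  · refine Real.sSup_le ?_ (tsum_nonneg fun _ => norm_nonneg _)
    rintro r ⟨n, e, f, he, hf, rfl⟩
    have hterm : ∀ i, HasSum (fun k : {k // k ∉ s} =>
        a k * (⟪f i, u k⟫ * ⟪u k, e i⟫))
        ⟪f i, (T - ∑ k ∈ s, a k • rankOne (u k) (u k)) (e i)⟫ := by
      intro i
      have h := (s.hasSum_iff_compl).1 (hT (f i) (e i))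
      convert! h using 1
      rw [sub_apply, inner_sub_right, sum_apply, inner_sum]
      congr 1
      refine Finset.sum_congr rfl fun k _ => ?_
      simp [rankOne, inner_smul_right, mul_comm]
    have ha' : Summable (fun k : {k // k ∉ s} => ‖a k‖) := ha.subtype _
    have hb : ∀ i (k : ℕ), ‖a k * (⟪f i, u k⟫ * ⟪u k, e i⟫)‖
        = ‖a k‖ * (‖⟪f i, u k⟫‖ * ‖⟪u k, e i⟫‖) := fun i k => by simp
    have hsm : ∀ i, Summable (fun k : {k // k ∉ s} =>
        ‖a k * (⟪f i, u k⟫ * ⟪u k, e i⟫)‖) := by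
      intro i
      refine Summable.of_nonneg_of_le (fun _ => norm_nonneg _) (fun k => ?_) ha'
      rw [hb]
      refine mul_le_of_le_one_right (norm_nonneg _) ?_
      refine mul_le_one₀ ?_ (norm_nonneg _) ?_
      · refine (norm_inner_le_norm _ _).trans ?_
        rw [hu, hf.1]; norm_num
      · refine (norm_inner_le_norm _ _).trans ?_
        rw [hu, he.1]; norm_num
    calc ∑ i, ‖⟪f i, (T - ∑ k ∈ s, a k • rankOne (u k) (u k)) (e i)⟫‖
        ≤ ∑ i, ∑' k : {k // k ∉ s}, ‖a k * (⟪f i, u k⟫ * ⟪u k, e i⟫)‖ := by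
          refine Finset.sum_le_sum fun i _ => ?_
          rw [← (hterm i).tsum_eq]
          exact norm_tsum_le_tsum_norm (hsm i)
      _ = ∑' k : {k // k ∉ s}, ∑ i, ‖a k * (⟪f i, u k⟫ * ⟪u k, e i⟫)‖ :=
          (Summable.tsum_finsetSum fun i _ => hsm i).symm
      _ ≤ ∑' k : {k // k ∉ s}, ‖a k‖ := by
          refine Summable.tsum_le_tsum (fun k => ?_) (summable_sum fun i _ => hsm i) ha'
          simp_rw [hb]
          rw [← Finset.mul_sum]
          exact mul_le_of_le_one_right (norm_nonneg _) (sum_rankOne_le he hf _ _ (hu _) (hu _))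

theorem rankOne_isTraceClass (u : K) (hu : ‖u‖ = 1) : IsTraceClass (rankOne u u) := by
  refine ⟨1, fun n e f he hf => ?_⟩
  refine le_trans (le_of_eq ?_) (sum_rankOne_le he hf u u hu hu)
  refine Finset.sum_congr rfl fun i _ => ?_
  simp [rankOne, mul_comm]

theorem rankOne_isPositive [CompleteSpace K] (u : K) : (rankOne u u).IsPositive := by
  rw [isPositive_iff_complex]
  intro x
  have : ⟪rankOne u u x, x⟫ = ((‖⟪u, x⟫‖ ^ 2 : ℝ) : ℂ) := by
    rw [inner_mul_symm_ofReal]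
    simp [rankOne, mul_comm]
  rw [this]
  constructor
  · rw [RCLike.re_to_complex, Complex.ofReal_re]
  · simp only [RCLike.re_to_complex, Complex.ofReal_re]; positivity

theorem rankOne_isState [CompleteSpace K] (u : K) (hu : ‖u‖ = 1) : IsState (rankOne u u) := by
  refine ⟨rankOne_isTraceClass u hu, rankOne_isPositive u, ?_⟩
  have h := (stdONB K).hasSum_inner_mul_inner u u
  have h2 : ⟪u, u⟫ = (1 : ℂ) := by rw [inner_self_eq_norm_sq_to_K, hu]; simp
  rw [h2] at h
  rw [Tr, ← h.tsum_eq]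
  congr 1
  funext i
  simp [rankOne]

theorem Tr_rankOne_mul [CompleteSpace H] (v : H) (X : H →L[ℂ] H) :
    Tr (rankOne v v * X) = ⟪v, X v⟫ := by
  have h := (stdONB H).hasSum_inner_mul_inner (adjoint X v) v
  rw [adjoint_inner_left] at h
  rw [Tr, ← h.tsum_eq]
  congr 1
  funext i
  simp [rankOne, adjoint_inner_left]

end

section
variable {H : Type*} [NormedAddCommGroup H] [InnerProductSpace ℂ H] [CompleteSpace H]

/-- The two facts about trace-class operators we need. -/
def Nice (X : H →L[ℂ] H) : Prop :=
  (∀ v : ℕ → H, IsPF v → Summable fun n => ‖⟪v n, X (v n)⟫‖) ∧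
  (∀ G : H →L[ℂ] H, adjoint G = G → ∃ t : ℂ,
    HasSum (fun i => ⟪stdONB H i, (G * G * X) (stdONB H i)⟫) t ∧
    HasSum (fun i => ⟪G (stdONB H i), X (G (stdONB H i))⟫) t)

theorem Nice.add {X Y : H →L[ℂ] H} (hX : Nice X) (hY : Nice Y) : Nice (X + Y) := by
  refine ⟨fun v hv => ?_, fun G hG => ?_⟩
  · refine Summable.of_nonneg_of_le (fun _ => norm_nonneg _) (fun n => ?_)
      ((hX.1 v hv).add (hY.1 v hv))
    rw [add_apply, inner_add_right]
    exact norm_add_le _ _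
  · obtain ⟨t, h1, h2⟩ := hX.2 G hG
    obtain ⟨t', h1', h2'⟩ := hY.2 G hG
    refine ⟨t + t', ?_, ?_⟩
    · convert h1.add h1' using 2 with i
      rw [mul_add, add_apply, inner_add_right]
    · convert h2.add h2' using 2 with i
      rw [add_apply, inner_add_right]

theorem Nice.smul {X : H →L[ℂ] H} (hX : Nice X) (c : ℂ) : Nice (c • X) := by
  refine ⟨fun v hv => ?_, fun G hG => ?_⟩
  · convert! (hX.1 v hv).mul_left ‖c‖ using 2 with n
    rw [smul_apply, inner_smul_right, norm_mul]
  · obtain ⟨t, h1, h2⟩ := hX.2 G hG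
    refine ⟨c * t, ?_, ?_⟩
    · convert! h1.mul_left c using 2 with i
      rw [mul_smul_comm, smul_apply, inner_smul_right]
    · convert! h2.mul_left c using 2 with i
      rw [smul_apply, inner_smul_right]

theorem nice_sq {S : H →L[ℂ] H} (hS : adjoint S = S)
    (hs : Summable fun i => ‖S (stdONB H i)‖ ^ 2) : Nice (S * S) := by
  have he := (stdONB H).isPF
  have hSi : ∀ x y : H, ⟪x, S y⟫ = ⟪S x, y⟫ := fun x y => by
    conv_lhs => rw [← hS, adjoint_inner_right]
  refine ⟨fun v hv => ?_, fun G hG => ?_⟩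
  · have h := hs_swap S v (fun i => stdONB H i) (t := ∑' i, ‖S (stdONB H i)‖ ^ 2)
      (fun i => he _) (fun j => hv _) (by rw [hS]; exact hs.hasSum)
    convert h.summable using 2 with n
    rw [mul_apply_eq_comp, hSi, inner_self_eq_norm_sq_to_K]
    simp
  · have hGi : ∀ x y : H, ⟪x, G y⟫ = ⟪G x, y⟫ := fun x y => by
      conv_lhs => rw [← hG, adjoint_inner_right]
    have bd : ∀ F : H →L[ℂ] H, adjoint F = F →
        Summable fun i => ‖(S * F) (stdONB H i)‖ ^ 2 := by
      intro F hF
      have hadj : adjoint (S * F) = F * S := by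
        rw [mul_def, adjoint_comp, hS, hF]; rfl
      have hs' : Summable fun i => ‖(F * S) (stdONB H i)‖ ^ 2 := by
        refine Summable.of_nonneg_of_le (fun _ => by positivity) (fun i => ?_)
          (hs.mul_left (‖F‖ ^ 2))
        rw [← mul_pow]
        exact pow_le_pow_left₀ (norm_nonneg _) (F.le_opNorm _) 2
      exact (hs_swap (S * F) (fun i => stdONB H i) (fun i => stdONB H i)
        (fun i => he _) (fun j => he _) (by rw [hadj]; exact hs'.hasSum)).summable
    have hGG : adjoint (G * G) = G * G := by rw [mul_def, adjoint_comp, hG]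
    obtain ⟨t, h1, h2⟩ := hs_cyc (S * (G * G)) S he he (bd _ hGG) hs
    obtain ⟨t', h1', h2'⟩ := hs_cyc (S * G) (S * G) he he (bd _ hG) (bd _ hG)
    have ha1 : adjoint (S * (G * G)) = (G * G) * S := by
      rw [mul_def S, adjoint_comp, hS, hGG]; rfl
    have ha2 : adjoint (S * G) = G * S := by rw [mul_def, adjoint_comp, hS, hG]; rfl
    rw [ha1, hS] at h2
    rw [ha2] at h2'
    have htt : t = t' := by
      refine h2.unique ?_
      convert h2' using 2 with i
      simp [hGi]
    refine ⟨t, ?_, ?_⟩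
    · convert h1 using 2 with i
      simp [hSi, hGi]
    · rw [htt]
      convert h1' using 2 with i
      simp [hSi]

theorem nice_pos {Y P N : H →L[ℂ] H} (hY : IsTraceClass Y) (hP : 0 ≤ P)
    (hN : adjoint N = N) (hNP : N * P = 0) (hYPN : P - N = Y) : Nice P := by
  set S := CFC.sqrt P with hSdef
  have hSS : S * S = P := CFC.sqrt_mul_sqrt_self P hP
  have hS : adjoint S = S := (IsSelfAdjoint.of_nonneg (CFC.sqrt_nonneg P)).star_eq
  have hSi : ∀ x y : H, ⟪x, S y⟫ = ⟪S x, y⟫ := fun x y => by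
    conv_lhs => rw [← hS, adjoint_inner_right]
  have hNi : ∀ x y : H, ⟪x, N y⟫ = ⟪N x, y⟫ := fun x y => by
    conv_lhs => rw [← hN, adjoint_inner_right]
  have hPN : P * N = 0 := by
    have := congrArg adjoint hNP
    rwa [mul_def, adjoint_comp, hN, map_zero, ← hSS, mul_def, adjoint_comp, hS, ← mul_def,
      ← mul_def, hSS] at this
  have hSN : ∀ x, S (N x) = 0 := by
    intro x
    rw [← inner_self_eq_zero (𝕜 := ℂ), ← hSi]
    have : S (S (N x)) = 0 := by
      have h := congrArg (fun T : H →L[ℂ] H => T x) hPN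
      rw [← hSS] at h
      simpa using h
    rw [this, inner_zero_right]
  have hNS : ∀ x, N (S x) = 0 := by
    intro x
    refine ext_inner_left ℂ fun y => ?_
    rw [hNi, hSi, hSN]; simp
  rw [← hSS]
  refine nice_sq hS ?_
  let M : Submodule ℂ H := LinearMap.ker (N : H →ₗ[ℂ] H)
  have hMc : IsClosed (M : Set H) := N.isClosed_ker
  have : CompleteSpace M := hMc.completeSpace_coe
  obtain ⟨w, b, -⟩ := exists_hilbertBasis ℂ M
  have hbo : Orthonormal ℂ (fun i => (b i : H)) := b.orthonormal.comp_linearIsometry M.subtypeₗᵢ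
  have hb : ∀ x ∈ M, HasSum (fun i => ‖⟪(b i : H), x⟫‖ ^ 2) (‖x‖ ^ 2) := fun x hx =>
    b.isPF ⟨x, hx⟩
  obtain ⟨C, hC⟩ := hY
  have hbs : Summable fun i => ‖S (b i : H)‖ ^ 2 := by
    refine summable_of_sum_le (c := C) (fun _ => by positivity) fun s => ?_
    have ho : Orthonormal ℂ (fun k : Fin s.card => (b (s.equivFin.symm k) : H)) :=
      hbo.comp _ (Subtype.val_injective.comp s.equivFin.symm.injective)
    refine le_trans (le_of_eq ?_) (hC _ _ _ ho ho)
    rw [← Finset.sum_coe_sort, ← Equiv.sum_comp s.equivFin.symm]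
    refine Finset.sum_congr rfl fun k _ => ?_
    have hk : N (b (s.equivFin.symm k) : H) = 0 := (b (s.equivFin.symm k)).2
    rw [← hYPN, sub_apply, hk, sub_zero, ← hSS, mul_apply_eq_comp, hSi, inner_self_eq_norm_sq_to_K]
    simp
  refine (hs_swap S (fun i => stdONB H i) (fun i => (b i : H)) (fun i => hb _ (hNS _))
    (fun j => (stdONB H).isPF _) (by rw [hS]; exact hbs.hasSum)).summable

theorem nice_selfAdjoint {Y : H →L[ℂ] H} (hY : IsTraceClass Y) (hs : IsSelfAdjoint Y) :
    Nice Y := by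
  have h := CFC.posPart_sub_negPart Y hs
  have h1 : Nice (Y⁺) := nice_pos hY (CFC.posPart_nonneg Y)
    (IsSelfAdjoint.of_nonneg (CFC.negPart_nonneg Y)).star_eq (CFC.negPart_mul_posPart Y) h
  have h2 : Nice (Y⁻) := nice_pos hY.neg (CFC.negPart_nonneg Y)
    (IsSelfAdjoint.of_nonneg (CFC.posPart_nonneg Y)).star_eq (CFC.posPart_mul_negPart Y)
    (by rw [← neg_sub, h])
  have h3 := h1.add (h2.smul (-1))
  rw [neg_one_smul, ← sub_eq_add_neg] at h3
  rwa [h] at h3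

theorem IsTraceClass.nice {X : H →L[ℂ] H} (hX : IsTraceClass X) : Nice X := by
  have h1 : Nice (X + adjoint X) := nice_selfAdjoint (hX.add hX.adj) (by
    change star (X + star X) = X + star X
    rw [star_add, star_star, add_comm])
  have h2 : Nice (Complex.I • (X - adjoint X)) :=
    nice_selfAdjoint ((hX.sub hX.adj).smul _) (by
      change star (Complex.I • (X - star X)) = Complex.I • (X - star X)
      rw [star_smul, star_sub, star_star]
      simp only [RCLike.star_def, Complex.conj_I, neg_smul, ← smul_neg, neg_sub])
  have h3 := (h1.smul (1 / 2)).add (h2.smul (-Complex.I / 2))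
  convert h3 using 1
  rw [smul_smul]
  have : -Complex.I / 2 * Complex.I = 1 / 2 := by
    rw [div_mul_eq_mul_div, neg_mul, Complex.I_mul_I]; norm_num
  rw [this, ← smul_add]
  have h4 : X + adjoint X + (X - adjoint X) = (2 : ℂ) • X := by rw [two_smul]; abel
  rw [h4, smul_smul]; norm_num

theorem stdONB_countable [TopologicalSpace.SeparableSpace H] :
    Countable (exists_hilbertBasis ℂ H).choose := by
  have ho := (stdONB H).orthonormal
  refine Pairwise.countable_of_isOpen_disjoint
    (s := fun i => Metric.ball (stdONB H i) (1 / 2)) ?_ (fun i => Metric.isOpen_ball)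
    (fun i => ⟨stdONB H i, Metric.mem_ball_self (by norm_num)⟩)
  intro i j hij
  refine Metric.ball_disjoint_ball ?_
  rw [dist_eq_norm]
  have h : ‖stdONB H i - stdONB H j‖ ^ 2 = 2 := by
    rw [@norm_sub_sq ℂ, ho.1 i, ho.1 j, ho.2 hij]; norm_num
  nlinarith [norm_nonneg (stdONB H i - stdONB H j)]

end

section
variable {K : Type*} [NormedAddCommGroup K] [InnerProductSpace ℂ K] [CompleteSpace K]

theorem exists_sqrt {F : K →L[ℂ] K} (hF : F.IsPositive) :
    ∃ G : K →L[ℂ] K, adjoint G = G ∧ G * G = F := by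
  have hP : 0 ≤ F := (nonneg_iff_isPositive F).2 hF
  exact ⟨CFC.sqrt F, (IsSelfAdjoint.of_nonneg (CFC.sqrt_nonneg F)).star_eq,
    CFC.sqrt_mul_sqrt_self F hP⟩

theorem state_decomp {R : K →L[ℂ] K} (hR : IsState R) :
    ∃ (l : (exists_hilbertBasis ℂ K).choose → ℝ) (u : (exists_hilbertBasis ℂ K).choose → K),
      (∀ j, ‖u j‖ = 1) ∧ HasSum (fun j => l j ^ 2) 1 ∧
      ∀ x y, HasSum (fun j => ((l j : ℂ) ^ 2) * (⟪x, u j⟫ * ⟪u j, y⟫)) ⟪x, R y⟫ := by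
  obtain ⟨-, hpos, htr⟩ := hR
  obtain ⟨G, hG, hGG⟩ := exists_sqrt hpos
  have hGi : ∀ x y : K, ⟪x, G y⟫ = ⟪G x, y⟫ := fun x y => by
    conv_lhs => rw [← hG, adjoint_inner_right]
  have hterm : ∀ i, ⟪stdONB K i, R (stdONB K i)⟫ = ((‖G (stdONB K i)‖ ^ 2 : ℝ) : ℂ) := by
    intro i
    rw [← hGG, mul_apply_eq_comp, hGi, inner_self_eq_norm_sq_to_K]; simp
  have hsum : HasSum (fun j => ‖G (stdONB K j)‖ ^ 2) 1 := by
    rw [← Complex.hasSum_ofReal]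
    simp_rw [← hterm]
    have hs : Summable (fun i => ⟪stdONB K i, R (stdONB K i)⟫) := by
      by_contra hns
      rw [Tr, tsum_eq_zero_of_not_summable hns] at htr
      exact zero_ne_one htr
    have := hs.hasSum
    rw [← Tr, htr] at this
    simpa using this
  obtain ⟨u0, hu0⟩ : ∃ u0 : K, ‖u0‖ = 1 := by
    have hne : ∃ j, stdONB K j = stdONB K j := by
      by_contra hcon
      push Not at hcon
      have : (fun j => ‖G (stdONB K j)‖ ^ 2) = fun _ => 0 := funext fun j => (hcon j rfl).elim
      rw [this] at hsum
      exact zero_ne_one (hasSum_zero.unique hsum)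
    obtain ⟨j, -⟩ := hne
    exact ⟨stdONB K j, (stdONB K).orthonormal.1 j⟩
  classical
  refine ⟨fun j => ‖G (stdONB K j)‖, fun j => if G (stdONB K j) = 0 then u0 else
    ((‖G (stdONB K j)‖ : ℂ)⁻¹) • G (stdONB K j), fun j => ?_, hsum, fun x y => ?_⟩
  · by_cases h : G (stdONB K j) = 0
    · simp [h, hu0]
    · simp only [h, if_false]
      rw [norm_smul]; simp [h]
  · have h := (stdONB K).hasSum_inner_mul_inner (G x) (G y)
    rw [← hGi, ← mul_apply_eq_comp, hGG] at h
    convert! h using 2 with j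
    rw [← hGi, hGi _ y]
    by_cases h : G (stdONB K j) = 0
    · simp [h]
    · have h' : (‖G (stdONB K j)‖ : ℂ) ≠ 0 := by simpa using h
      simp only [h, if_false]
      rw [inner_smul_left, inner_smul_right]
      simp only [map_inv₀, Complex.conj_ofReal]
      field_simp

end

theorem hasSum_extend {ι M N : Type*} [AddCommMonoid N] [TopologicalSpace N] {g : ι → ℕ}
    (hg : Function.Injective g) (v : ι → M) (d : ℕ → M) (φ : ℕ → M → N) {t : N}
    (h0 : ∀ n, φ n (d n) = 0) :
    HasSum (fun i => φ (g i) (v i)) t ↔ HasSum (fun n => φ n (Function.extend g v d n)) t := by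
  rw [← hg.hasSum_iff (f := fun n => φ n (Function.extend g v d n))]
  · simp only [Function.comp_def, hg.extend_apply]
  · intro n hn
    rw [Function.extend_apply' _ _ _ (by simpa using hn)]
    exact h0 n

theorem holevo_forward
    {H K : Type*} [NormedAddCommGroup H] [InnerProductSpace ℂ H] [CompleteSpace H]
    [TopologicalSpace.SeparableSpace H]
    [NormedAddCommGroup K] [InnerProductSpace ℂ K] [CompleteSpace K]
    [TopologicalSpace.SeparableSpace K]
    (Φ : (H →L[ℂ] H) →ₗ[ℂ] (K →L[ℂ] K)) (hΦ : IsChannel Φ)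
    (R : ℕ → (K →L[ℂ] K)) (F : ℕ → (H →L[ℂ] H))
    (hR : ∀ k, IsState (R k)) (hF : ∀ k, (F k).IsPositive)
    (hFI : ∀ x : H, HasSum (fun k => F k x) x)
    (hH : ∀ X : H →L[ℂ] H, IsTraceClass X → HasSumTN (fun k => Tr (F k * X) • R k) (Φ X)) :
    (∃ (u : ℕ → K) (v : ℕ → H),
        (∀ k, ‖u k‖ = 1) ∧
        (∀ x : H, HasSum (fun k => ⟪v k, x⟫ • v k) x) ∧
        ∀ X : H →L[ℂ] H, IsTraceClass X →
          HasSumTN (fun k => ⟪v k, X (v k)⟫ • rankOne (u k) (u k)) (Φ X)) := by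
  choose l u hu hl hw using fun k => state_decomp (hR k)
  choose G hG hGG using fun k => exists_sqrt (hF k)
  have hGi : ∀ k (x y : H), ⟪x, G k y⟫ = ⟪G k x, y⟫ := fun k x y => by
    conv_lhs => rw [← hG, adjoint_inner_right]
  obtain ⟨u0, hu0⟩ : ∃ u0 : K, ‖u0‖ = 1 := by
    by_contra hcon
    push Not at hcon
    have : (fun j => l 0 j ^ 2) = fun _ => 0 := funext fun j => (hcon _ (hu 0 j)).elim
    have h := hl 0
    rw [this] at h
    exact zero_ne_one (hasSum_zero.unique h)
  have := stdONB_countable (H := H)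
  have := stdONB_countable (H := K)
  let I := (exists_hilbertBasis ℂ H).choose
  let J := (exists_hilbertBasis ℂ K).choose
  obtain ⟨g, hg⟩ := exists_injective_nat (ℕ × (I × J))
  let V : ℕ × (I × J) → H := fun p => (l p.1 p.2.2 : ℂ) • G p.1 (stdONB H p.2.1)
  let U : ℕ × (I × J) → K := fun p => u p.1 p.2.2
  let v : ℕ → H := Function.extend g V (fun _ => 0)
  let u' : ℕ → K := Function.extend g U (fun _ => u0)
  have hu' : ∀ n, ‖u' n‖ = 1 := by
    intro n
    by_cases hn : ∃ p, g p = n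
    · obtain ⟨p, rfl⟩ := hn
      simp only [u', hg.extend_apply]
      exact hu _ _
    · simp only [u', Function.extend_apply' _ _ _ hn]
      exact hu0
  have hVPF : IsPF V := by
    intro x
    have hk : HasSum (fun k => ‖G k x‖ ^ 2) (‖x‖ ^ 2) := by
      rw [← Complex.hasSum_ofReal]
      have h := (hFI x).mapL (innerSL ℂ x)
      simp only [innerSL_apply_apply] at h
      convert! h using 1
      · funext k
        rw [← hGG k, mul_apply_eq_comp, hGi, inner_self_eq_norm_sq_to_K]; simp
      · rw [inner_self_eq_norm_sq_to_K]; simp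
    refine hasSum_prod_nonneg (fun _ => by positivity) (fun k => ?_) hk
    refine hasSum_prod_nonneg (g := fun i => ‖⟪stdONB H i, G k x⟫‖ ^ 2)
      (fun _ => by positivity) (fun i => ?_) ((stdONB H).isPF (G k x))
    have h := (hl k).mul_right (‖⟪stdONB H i, G k x⟫‖ ^ 2)
    rw [one_mul] at h
    convert! h using 2 with j
    simp only [V]
    rw [inner_smul_left, norm_mul, mul_pow, hGi]
    simp
  have hvPF : IsPF v := fun x =>
    (hasSum_extend hg V (fun _ => 0) (fun _ z => ‖⟪z, x⟫‖ ^ 2) (by simp)).1 (hVPF x)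
  refine ⟨u', v, hu', fun x => hvPF.hasSum x, fun X hX => ?_⟩
  have hs : Summable fun n => ‖⟪v n, X (v n)⟫‖ := hX.nice.1 v hvPF
  refine hasSumTN_of_weak hu' hs fun x y => ?_
  have hweak := (hH X hX).weak (hΦ.maps_traceClass X hX) (fun k => (hR k).1.smul _) x y
  have hs2 : Summable fun n => ⟪v n, X (v n)⟫ * (⟪x, u' n⟫ * ⟪u' n, y⟫) := by
    refine Summable.of_norm_bounded (hs.mul_right (‖x‖ * ‖y‖)) fun n => ?_
    rw [norm_mul, norm_mul]
    gcongr
    · simpa [hu'] using norm_inner_le_norm (𝕜 := ℂ) x (u' n)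
    · simpa [hu'] using norm_inner_le_norm (𝕜 := ℂ) (u' n) y
  have hs3 : HasSum (fun p : ℕ × (I × J) => ⟪V p, X (V p)⟫ * (⟪x, U p⟫ * ⟪U p, y⟫))
      (∑' n, ⟪v n, X (v n)⟫ * (⟪x, u' n⟫ * ⟪u' n, y⟫)) := by
    have h := (hasSum_extend hg V (fun _ => 0)
      (fun n z => ⟪z, X z⟫ * (⟪x, u' n⟫ * ⟪u' n, y⟫)) (by simp)).2 hs2.hasSum
    simpa only [u', hg.extend_apply] using h
  have hfib : ∀ k, HasSum (fun q : I × J => ⟪V (k, q), X (V (k, q))⟫ *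
      (⟪x, U (k, q)⟫ * ⟪U (k, q), y⟫)) ⟪x, (Tr (F k * X) • R k) y⟫ := by
    intro k
    obtain ⟨t, ht1, ht2⟩ := hX.nice.2 (G k) (hG k)
    have htr : Tr (F k * X) = t := by rw [← hGG k, Tr]; exact ht1.tsum_eq
    have hsk : Summable (fun q : I × J => ⟪V (k, q), X (V (k, q))⟫ *
        (⟪x, U (k, q)⟫ * ⟪U (k, q), y⟫)) :=
      hs3.summable.comp_injective (Prod.mk_right_injective k)
    have h1 := hsk.hasSum.prod_fiberwise
      (g := fun i => ⟪G k (stdONB H i), X (G k (stdONB H i))⟫ * ⟪x, R k y⟫) (fun i => by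
        convert! (hw k x y).mul_left ⟪G k (stdONB H i), X (G k (stdONB H i))⟫ using 2 with j
        simp only [V, U]
        rw [map_smul, inner_smul_left, inner_smul_right, Complex.conj_ofReal]
        ring)
    have h2 := ht2.mul_right ⟪x, R k y⟫
    rw [smul_apply, inner_smul_right, htr, h2.unique h1]
    exact hsk.hasSum
  have h4 := hs3.prod_fiberwise hfib
  rw [hweak.unique h4]
  exact hs2.hasSum

/-- A quantum channel between trace-class operators on separable
Hilbert spaces admits a Holevo form iff it admits an operator-sum representation
by rank-one operations. -/
theorem holevo_form_iff_rank_one_representation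
    {H K : Type*} [NormedAddCommGroup H] [InnerProductSpace ℂ H] [CompleteSpace H]
    [TopologicalSpace.SeparableSpace H]
    [NormedAddCommGroup K] [InnerProductSpace ℂ K] [CompleteSpace K]
    [TopologicalSpace.SeparableSpace K]
    (Φ : (H →L[ℂ] H) →ₗ[ℂ] (K →L[ℂ] K)) (hΦ : IsChannel Φ) :
    (∃ (R : ℕ → (K →L[ℂ] K)) (F : ℕ → (H →L[ℂ] H)),
        (∀ k, IsState (R k)) ∧ (∀ k, (F k).IsPositive) ∧
        (∀ x : H, HasSum (fun k => F k x) x) ∧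
        ∀ X : H →L[ℂ] H, IsTraceClass X →
          HasSumTN (fun k => Tr (F k * X) • R k) (Φ X)) ↔
    (∃ (u : ℕ → K) (v : ℕ → H),
        (∀ k, ‖u k‖ = 1) ∧
        (∀ x : H, HasSum (fun k => ⟪v k, x⟫ • v k) x) ∧
        ∀ X : H →L[ℂ] H, IsTraceClass X →
          HasSumTN (fun k => ⟪v k, X (v k)⟫ • rankOne (u k) (u k)) (Φ X)) := by
  constructor
  · rintro ⟨R, F, hR, hF, hFI, hH⟩
    exact holevo_forward Φ hΦ R F hR hF hFI hH
  · rintro ⟨u, v, hu, hv, h⟩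
    refine ⟨fun k => rankOne (u k) (u k), fun k => rankOne (v k) (v k),
      fun k => rankOne_isState _ (hu k), fun k => rankOne_isPositive _, fun x => hv x,
      fun X hX => ?_⟩
    simp_rw [Tr_rankOne_mul]
    exact h X hX

end
end

section
/- Let H be a complex separable Hilbert space. A quantum channel Φ: T(H) → T(H) is strongly entanglement breaking if and only if the linear functional Φ̃* on the projective tensor product B(H) ⊗̂ T(H) determined by Φ̃*(Y ⊗ X) = Tr(Φ*(Y) Xᵗ) can be written as Φ̃* = Σ_{k=1}^∞ w_k ⊗ ρ_k, where each w_k is a weak*-continuous positive norm-one linear functional on B(H), each ρ_k is the functional X ↦ Tr(F_k Xᵗ) for some positive operator F_k ∈ B(H), and Σ_{k=1}^∞ F_k = I_H (strong operator topology); here Φ*: B(H) → B(H) is the dual map of Φ and Xᵗ is the transpose with respect to a fixed orthonormal basis {e_i} of H, defined by ⟨e_i, Xᵗ e_j⟩ = ⟨e_j, X e_i⟩. -/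
noncomputable section

open scoped ComplexInnerProductSpace
open ContinuousLinearMap Filter Topology

section helpers

open scoped ComplexOrder

variable {H : Type*} [NormedAddCommGroup H] [InnerProductSpace ℂ H]

lemma tcBdd {T : H →L[ℂ] H} (hT : IsTraceClass T) :
    BddAbove { r : ℝ | ∃ (n : ℕ) (e : Fin n → H) (f : Fin n → H),
    Orthonormal ℂ e ∧ Orthonormal ℂ f ∧ r = ∑ i, ‖⟪f i, T (e i)⟫‖ } := by
  obtain ⟨C, hC⟩ := hT
  refine ⟨C, ?_⟩
  rintro r ⟨n, e, f, he, hf, rfl⟩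
  exact hC n e f he hf

lemma sum_le_traceNorm {T : H →L[ℂ] H} (hT : IsTraceClass T) {n : ℕ} {e f : Fin n → H}
    (he : Orthonormal ℂ e) (hf : Orthonormal ℂ f) :
    (∑ i, ‖⟪f i, T (e i)⟫‖) ≤ traceNorm T :=
  le_csSup (tcBdd hT) ⟨n, e, f, he, hf, rfl⟩

lemma traceNorm_nonneg (T : H →L[ℂ] H) : 0 ≤ traceNorm T := by
  apply Real.sSup_nonneg
  rintro r ⟨n, e, f, he, hf, rfl⟩
  positivity

lemma traceNorm_le {T : H →L[ℂ] H} {C : ℝ}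
    (h : ∀ (n : ℕ) (e : Fin n → H) (f : Fin n → H),
    Orthonormal ℂ e → Orthonormal ℂ f → (∑ i, ‖⟪f i, T (e i)⟫‖) ≤ C) : traceNorm T ≤ C := by
  apply csSup_le
  · exact ⟨_, 0, Fin.elim0, Fin.elim0, ⟨fun i => i.elim0, fun i => i.elim0⟩,
      ⟨fun i => i.elim0, fun i => i.elim0⟩, rfl⟩
  · rintro r ⟨n, e, f, he, hf, rfl⟩
    exact h n e f he hf

lemma sum_le_traceNorm_finset {T : H →L[ℂ] H} (hT : IsTraceClass T) {ι : Type*} {e f : ι → H}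
    (he : Orthonormal ℂ e) (hf : Orthonormal ℂ f) (s : Finset ι) :
    (∑ i ∈ s, ‖⟪f i, T (e i)⟫‖) ≤ traceNorm T := by
  have h := sum_le_traceNorm hT (he.comp (fun i : Fin s.card => (s.equivFin.symm i : ι))
      (Subtype.val_injective.comp s.equivFin.symm.injective))
    (hf.comp (fun i : Fin s.card => (s.equivFin.symm i : ι))
      (Subtype.val_injective.comp s.equivFin.symm.injective))
  refine le_trans (le_of_eq ?_) h
  rw [← Finset.sum_coe_sort]
  exact (Equiv.sum_comp s.equivFin.symm (fun i : s => ‖⟪f i, T (e i)⟫‖)).symm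

lemma tc_summable {T : H →L[ℂ] H} (hT : IsTraceClass T) {ι : Type*} {e f : ι → H}
    (he : Orthonormal ℂ e) (hf : Orthonormal ℂ f) :
    Summable (fun i => ‖⟪f i, T (e i)⟫‖) :=
  summable_of_sum_le (fun _ => norm_nonneg _) (fun s => sum_le_traceNorm_finset hT he hf s)

lemma tc_zero : IsTraceClass (0 : H →L[ℂ] H) := ⟨0, by simp⟩

lemma tc_add {S T : H →L[ℂ] H} (hS : IsTraceClass S) (hT : IsTraceClass T) :
    IsTraceClass (S + T) := by
  obtain ⟨C, hC⟩ := hS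
  obtain ⟨D, hD⟩ := hT
  refine ⟨C + D, fun n e f he hf => ?_⟩
  refine le_trans ?_ (add_le_add (hC n e f he hf) (hD n e f he hf))
  rw [← Finset.sum_add_distrib]
  refine Finset.sum_le_sum fun i _ => ?_
  rw [add_apply, inner_add_right]
  exact norm_add_le _ _

lemma tc_smul (c : ℂ) {T : H →L[ℂ] H} (hT : IsTraceClass T) : IsTraceClass (c • T) := by
  obtain ⟨D, hD⟩ := hT
  refine ⟨‖c‖ * D, fun n e f he hf => ?_⟩
  refine le_trans (le_of_eq ?_) (mul_le_mul_of_nonneg_left (hD n e f he hf) (norm_nonneg c))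
  rw [Finset.mul_sum]
  refine Finset.sum_congr rfl fun i _ => ?_
  rw [smul_apply, inner_smul_right, norm_mul]

lemma tc_sub {S T : H →L[ℂ] H} (hS : IsTraceClass S) (hT : IsTraceClass T) :
    IsTraceClass (S - T) := by
  have := tc_add hS (tc_smul (-1) hT)
  simpa [sub_eq_add_neg] using this

lemma tc_sum {ι : Type*} (s : Finset ι) {T : ι → (H →L[ℂ] H)} (h : ∀ i, IsTraceClass (T i)) :
    IsTraceClass (∑ i ∈ s, T i) := by
  classical
  induction s using Finset.induction_on with
  | empty => simpa using tc_zero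
  | insert a s ha ih => rw [Finset.sum_insert ha]; exact tc_add (h a) ih

variable [CompleteSpace H]

lemma tc_adjoint {T : H →L[ℂ] H} (hT : IsTraceClass T) : IsTraceClass (star T) := by
  obtain ⟨D, hD⟩ := hT
  refine ⟨D, fun n e f he hf => ?_⟩
  refine le_trans (le_of_eq ?_) (hD n f e hf he)
  refine Finset.sum_congr rfl fun i _ => ?_
  rw [star_eq_adjoint, adjoint_inner_right, norm_inner_symm]

lemma orthonormal_unitary {ι : Type*} {e : ι → H} (he : Orthonormal ℂ e)
    (u : unitary (H →L[ℂ] H)) : Orthonormal ℂ (fun i => (u : H →L[ℂ] H) (e i)) :=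
  he.comp_linearIsometryEquiv (Unitary.linearIsometryEquiv u)

lemma tc_mul_unitary {T : H →L[ℂ] H} (hT : IsTraceClass T) (u : unitary (H →L[ℂ] H)) :
    IsTraceClass (T * (u : H →L[ℂ] H)) := by
  obtain ⟨D, hD⟩ := hT
  exact ⟨D, fun n e f he hf => hD n _ f (orthonormal_unitary he u) hf⟩

lemma traceNorm_mul_unitary {T : H →L[ℂ] H} (hT : IsTraceClass T) (u : unitary (H →L[ℂ] H)) :
    traceNorm (T * (u : H →L[ℂ] H)) ≤ traceNorm T :=
  traceNorm_le fun _ _ _ he hf => sum_le_traceNorm hT (orthonormal_unitary he u) hf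

lemma tc_mul {T : H →L[ℂ] H} (hT : IsTraceClass T) (Y : H →L[ℂ] H) :
    IsTraceClass (T * Y) := by
  obtain ⟨u, c, rfl, -⟩ := CStarAlgebra.exists_sum_four_unitary Y
  rw [Finset.mul_sum]
  refine tc_sum _ fun i => ?_
  rw [mul_smul_comm]
  exact tc_smul _ (tc_mul_unitary hT _)

lemma tc_mul_left {T : H →L[ℂ] H} (hT : IsTraceClass T) (Y : H →L[ℂ] H) :
    IsTraceClass (Y * T) := by
  have := tc_adjoint (tc_mul (tc_adjoint hT) (star Y))
  simpa using this

/-- trace in a given basis -/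
def trB {ι : Type*} (b : HilbertBasis ι ℂ H) (T : H →L[ℂ] H) : ℂ := ∑' i, ⟪b i, T (b i)⟫

lemma trB_hasSum {T : H →L[ℂ] H} (hT : IsTraceClass T) {ι : Type*} (b : HilbertBasis ι ℂ H) :
    HasSum (fun i => ⟪b i, T (b i)⟫) (trB b T) :=
  (tc_summable hT b.orthonormal b.orthonormal).of_norm.hasSum

lemma trB_add {S T : H →L[ℂ] H} (hS : IsTraceClass S) (hT : IsTraceClass T) {ι : Type*}
    (b : HilbertBasis ι ℂ H) : trB b (S + T) = trB b S + trB b T := by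
  rw [← ((trB_hasSum hS b).add (trB_hasSum hT b)).tsum_eq]
  simp [trB, inner_add_right]

lemma trB_smul (c : ℂ) (T : H →L[ℂ] H) {ι : Type*}
    (b : HilbertBasis ι ℂ H) : trB b (c • T) = c * trB b T := by
  simp [trB, inner_smul_right, tsum_mul_left]

lemma trB_sub {S T : H →L[ℂ] H} (hS : IsTraceClass S) (hT : IsTraceClass T) {ι : Type*}
    (b : HilbertBasis ι ℂ H) : trB b (S - T) = trB b S - trB b T := by
  rw [← ((trB_hasSum hS b).sub (trB_hasSum hT b)).tsum_eq]
  simp [trB, inner_sub_right]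

lemma parseval {ι : Type*} (b : HilbertBasis ι ℂ H) (x : H) :
    ∑' i, ENNReal.ofReal (‖⟪b i, x⟫‖ ^ 2) = ENNReal.ofReal (‖x‖ ^ 2) := by
  have h := b.hasSum_inner_mul_inner x x
  have h2 : HasSum (fun i => ‖⟪b i, x⟫‖ ^ 2) (‖x‖ ^ 2) := by
    have h3 := Complex.hasSum_re h
    convert h3 using 2 with i
    · rw [← inner_conj_symm x (b i), ← Complex.normSq_eq_conj_mul_self, Complex.ofReal_re,
        Complex.normSq_eq_norm_sq]
    · rw [inner_self_eq_norm_sq_to_K]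
      norm_cast
  rw [← ENNReal.ofReal_tsum_of_nonneg (fun _ => by positivity) h2.summable, h2.tsum_eq]

lemma trB_pos_indep {T : H →L[ℂ] H} (hT : IsTraceClass T) (hp : T.IsPositive) {ι κ : Type*}
    (b : HilbertBasis ι ℂ H) (c : HilbertBasis κ ℂ H) : trB b T = trB c T := by
  obtain ⟨S, hS, hST⟩ : ∃ S : H →L[ℂ] H, IsSelfAdjoint S ∧ S * S = T := by
    have h0 : 0 ≤ T := (nonneg_iff_isPositive T).2 hp
    exact ⟨CFC.sqrt T, (CFC.sqrt_nonneg T).isSelfAdjoint, CFC.sqrt_mul_sqrt_self T h0⟩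
  have key : ∀ x, ⟪x, T x⟫ = ((‖S x‖ ^ 2 : ℝ) : ℂ) := by
    intro x
    rw [← hST, mul_apply_eq_comp, ← adjoint_inner_left, ← star_eq_adjoint, hS.star_eq,
      inner_self_eq_norm_sq_to_K]
    norm_cast
  have hb : ∀ {μ : Type _} (d : HilbertBasis μ ℂ H),
      trB d T = (((∑' i, ENNReal.ofReal (‖S (d i)‖ ^ 2)).toReal : ℝ) : ℂ) := by
    intro μ d
    have h := tc_summable hT d.orthonormal d.orthonormal
    simp only [key, Complex.norm_real, norm_pow, norm_norm] at h
    rw [← ENNReal.ofReal_tsum_of_nonneg (fun _ => by positivity) h,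
      ENNReal.toReal_ofReal (tsum_nonneg fun _ => by positivity), trB, Complex.ofReal_tsum]
    simp only [key]
  have hc : ∀ {μ : Type _} (d : HilbertBasis μ ℂ H),
      trB d T = (((∑' i, ENNReal.ofReal (‖S (d i)‖ ^ 2)).toReal : ℝ) : ℂ) := by
    intro μ d
    have h := tc_summable hT d.orthonormal d.orthonormal
    simp only [key, Complex.norm_real, norm_pow, norm_norm] at h
    rw [← ENNReal.ofReal_tsum_of_nonneg (fun _ => by positivity) h,
      ENNReal.toReal_ofReal (tsum_nonneg fun _ => by positivity), trB, Complex.ofReal_tsum]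
    simp only [key]
  rw [hb b, hc c]
  congr 2
  simp_rw [← parseval c (S (b _)), ← parseval b (S (c _))]
  rw [ENNReal.tsum_comm]
  refine tsum_congr fun i => tsum_congr fun j => ?_
  rw [← adjoint_inner_left, ← star_eq_adjoint, hS.star_eq, norm_inner_symm]

lemma tc_posPart {T : H →L[ℂ] H} (hT : IsTraceClass T) (hs : IsSelfAdjoint T) :
    ∃ A B : H →L[ℂ] H, IsTraceClass A ∧ IsTraceClass B ∧ A.IsPositive ∧ B.IsPositive ∧
      T = A - B := by
  have h1 : T⁺ - T⁻ = T := CFC.posPart_sub_negPart T hs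
  have h2 : T⁻ * T⁺ = 0 := CFC.negPart_mul_posPart T
  have hp : (0 : H →L[ℂ] H) ≤ T⁺ := CFC.posPart_nonneg T
  have hn : (0 : H →L[ℂ] H) ≤ T⁻ := CFC.negPart_nonneg T
  set A : H →L[ℂ] H := T⁺
  set B : H →L[ℂ] H := T⁻
  let K : Submodule ℂ H := (LinearMap.range (A : H →ₗ[ℂ] H)).topologicalClosure
  have : CompleteSpace K := (Submodule.isClosed_topologicalClosure _).completeSpace_coe
  let P : H →L[ℂ] H := K.starProjection
  have hPA : P * A = A := by
    ext x
    exact K.starProjection_eq_self_iff.2 (Submodule.le_topologicalClosure _ ⟨x, rfl⟩)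
  have hPs : star P = P := (isSelfAdjoint_starProjection K).star_eq
  have hAP : A * P = A := by
    have := congrArg star hPA
    rwa [star_mul, hPs, hp.isSelfAdjoint.star_eq] at this
  have hBK : ∀ x ∈ K, B x = 0 := by
    intro x hx
    have hcl : IsClosed {x | B x = 0} := isClosed_eq B.continuous continuous_const
    refine closure_minimal ?_ hcl hx
    rintro _ ⟨y, rfl⟩
    exact congrArg (fun (Q : H →L[ℂ] H) => Q y) h2
  have hBP : B * P = 0 := by
    ext x
    exact hBK _ (K.starProjection_apply_mem x)
  have hTP : A = T * P := by rw [← h1, sub_mul, hAP, hBP, sub_zero]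
  have hA : IsTraceClass A := hTP ▸ tc_mul hT P
  refine ⟨A, B, hA, ?_, (nonneg_iff_isPositive _).1 hp, (nonneg_iff_isPositive _).1 hn, h1.symm⟩
  have : B = A - T := by rw [← h1]; abel
  rw [this]
  exact tc_sub hA hT

lemma trB_sa_indep {T : H →L[ℂ] H} (hT : IsTraceClass T) (hs : IsSelfAdjoint T) {ι κ : Type*}
    (b : HilbertBasis ι ℂ H) (c : HilbertBasis κ ℂ H) : trB b T = trB c T := by
  obtain ⟨A, B, hA, hB, hA', hB', rfl⟩ := tc_posPart hT hs
  rw [trB_sub hA hB, trB_sub hA hB, trB_pos_indep hA hA' b c, trB_pos_indep hB hB' b c]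

open ComplexStarModule in
lemma trB_indep {T : H →L[ℂ] H} (hT : IsTraceClass T) {ι κ : Type*}
    (b : HilbertBasis ι ℂ H) (c : HilbertBasis κ ℂ H) : trB b T = trB c T := by
  have h1 : IsTraceClass (T + star T) := tc_add hT (tc_adjoint hT)
  have h2 : IsTraceClass (Complex.I • (T - star T)) := tc_smul _ (tc_sub hT (tc_adjoint hT))
  have s1 : IsSelfAdjoint (T + star T) := IsSelfAdjoint.add_star_self T
  have s2 : IsSelfAdjoint (Complex.I • (T - star T)) := by
    rw [IsSelfAdjoint, star_smul, star_sub, star_star, Complex.star_def, Complex.conj_I, neg_smul,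
      ← smul_neg, neg_sub]
  have hT' : T = (1 / 2 : ℂ) • (T + star T) + (-Complex.I / 2) • (Complex.I • (T - star T)) := by
    rw [smul_smul, show -Complex.I / 2 * Complex.I = 1 / 2 by
      rw [div_mul_eq_mul_div, neg_mul, Complex.I_mul_I, neg_neg], ← smul_add]
    rw [show T + star T + (T - star T) = (2 : ℂ) • T by rw [two_smul]; abel, smul_smul]
    norm_num
  rw [hT', trB_add (tc_smul _ h1) (tc_smul _ h2), trB_add (tc_smul _ h1) (tc_smul _ h2),
    trB_smul, trB_smul, trB_smul (1/2), trB_smul (-Complex.I / 2), trB_sa_indep h1 s1 b c, trB_sa_indep h2 s2 b c]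

lemma Tr_eq (T : H →L[ℂ] H) : Tr T = trB (stdONB H) T := rfl

lemma Tr_add {S T : H →L[ℂ] H} (hS : IsTraceClass S) (hT : IsTraceClass T) :
    Tr (S + T) = Tr S + Tr T := trB_add hS hT _

lemma Tr_sub {S T : H →L[ℂ] H} (hS : IsTraceClass S) (hT : IsTraceClass T) :
    Tr (S - T) = Tr S - Tr T := trB_sub hS hT _

lemma Tr_smul (c : ℂ) (T : H →L[ℂ] H) : Tr (c • T) = c * Tr T := trB_smul c T _

lemma Tr_zero : Tr (0 : H →L[ℂ] H) = 0 := by simp [Tr]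

lemma Tr_sum {ι : Type*} (s : Finset ι) {T : ι → (H →L[ℂ] H)} (h : ∀ i, IsTraceClass (T i)) :
    Tr (∑ i ∈ s, T i) = ∑ i ∈ s, Tr (T i) := by
  classical
  induction s using Finset.induction_on with
  | empty => simpa using Tr_zero
  | insert a s ha ih => rw [Finset.sum_insert ha, Finset.sum_insert ha, Tr_add (h a) (tc_sum s h), ih]

lemma norm_Tr_le {T : H →L[ℂ] H} (hT : IsTraceClass T) : ‖Tr T‖ ≤ traceNorm T := by
  have ho := (stdONB H).orthonormal
  refine (norm_tsum_le_tsum_norm (tc_summable hT ho ho)).trans ?_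
  exact Real.tsum_le_of_sum_le (fun _ => norm_nonneg _) (fun s => sum_le_traceNorm_finset hT ho ho s)

lemma norm_Tr_mul_le (Y : H →L[ℂ] H) :
    ∃ C : ℝ, ∀ T : H →L[ℂ] H, IsTraceClass T → ‖Tr (T * Y)‖ ≤ C * traceNorm T := by
  obtain ⟨u, c, rfl, -⟩ := CStarAlgebra.exists_sum_four_unitary Y
  refine ⟨∑ i, ‖c i‖, fun T hT => ?_⟩
  rw [Finset.mul_sum, Tr_sum _ fun i => tc_mul hT _, Finset.sum_mul]
  refine (norm_sum_le _ _).trans (Finset.sum_le_sum fun i _ => ?_)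
  rw [mul_smul_comm, Tr_smul, norm_mul]
  gcongr
  exact (norm_Tr_le (tc_mul_unitary hT _)).trans (traceNorm_mul_unitary hT _)

lemma Tr_comm_unitary {T : H →L[ℂ] H} (hT : IsTraceClass T) (u : unitary (H →L[ℂ] H)) :
    Tr (T * (u : H →L[ℂ] H)) = Tr ((u : H →L[ℂ] H) * T) := by
  classical
  let b := stdONB H
  let c : HilbertBasis _ ℂ H :=
    HilbertBasis.ofRepr ((Unitary.linearIsometryEquiv u).symm.trans b.repr)
  have hc : ∀ i, c i = (u : H →L[ℂ] H) (b i) := by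
    intro i
    rw [← c.repr_symm_single, ← b.repr_symm_single]
    rfl
  rw [Tr_eq, Tr_eq, trB_indep (tc_mul_left hT _) (stdONB H) c, trB, trB]
  refine tsum_congr fun i => ?_
  rw [hc, mul_apply_eq_comp, mul_apply_eq_comp]
  exact ((Unitary.linearIsometryEquiv u).inner_map_map _ _).symm

lemma Tr_comm {T : H →L[ℂ] H} (hT : IsTraceClass T) (Y : H →L[ℂ] H) :
    Tr (T * Y) = Tr (Y * T) := by
  obtain ⟨u, c, rfl, -⟩ := CStarAlgebra.exists_sum_four_unitary Y
  rw [Finset.mul_sum, Finset.sum_mul, Tr_sum _ fun i => tc_mul hT _,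
    Tr_sum _ fun i => tc_mul_left hT _]
  refine Finset.sum_congr rfl fun i _ => ?_
  rw [mul_smul_comm, smul_mul_assoc, Tr_smul, Tr_smul, Tr_comm_unitary hT]

lemma Tr_star (T : H →L[ℂ] H) : Tr (star T) = star (Tr T) := by
  rw [Tr, Tr, tsum_star]
  refine tsum_congr fun i => ?_
  rw [star_eq_adjoint, adjoint_inner_right]
  exact (inner_conj_symm _ _).symm

lemma Tr_nonneg {T : H →L[ℂ] H} (hT : T.IsPositive) : 0 ≤ Tr T :=
  tsum_nonneg fun _ => hT.inner_nonneg_right _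

lemma Tr_mul_nonneg {R Y : H →L[ℂ] H} (hR : IsTraceClass R) (hp : R.IsPositive)
    (hY : Y.IsPositive) : 0 ≤ Tr (R * Y) := by
  obtain ⟨S, hS, hST⟩ : ∃ S : H →L[ℂ] H, IsSelfAdjoint S ∧ S * S = Y := by
    have h0 : 0 ≤ Y := (nonneg_iff_isPositive Y).2 hY
    exact ⟨CFC.sqrt Y, (CFC.sqrt_nonneg Y).isSelfAdjoint, CFC.sqrt_mul_sqrt_self Y h0⟩
  rw [← hST, ← mul_assoc, Tr_comm (tc_mul hR S)]
  have := hp.conj_adjoint S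
  rw [← star_eq_adjoint, hS.star_eq] at this
  exact Tr_nonneg this

lemma norm_Tr_mul_le_of_pos {R : H →L[ℂ] H} (hR : IsTraceClass R) (hp : R.IsPositive)
    (Y : H →L[ℂ] H) : ‖Tr (R * Y)‖ ≤ (Tr R).re * ‖Y‖ := by
  obtain ⟨c, hc, hcY⟩ : ∃ c : ℂ, ‖c‖ = 1 ∧ c * Tr (R * Y) = (‖Tr (R * Y)‖ : ℂ) := by
    by_cases h : Tr (R * Y) = 0
    · exact ⟨1, by simp, by simp [h]⟩
    · refine ⟨‖Tr (R * Y)‖ / Tr (R * Y), ?_, div_mul_cancel₀ _ h⟩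
      rw [norm_div, Complex.norm_real, norm_norm, div_self (norm_ne_zero_iff.2 h)]
  set Z := c • Y with hZ
  have hZn : ‖Z‖ = ‖Y‖ := by rw [hZ, norm_smul, hc, one_mul]
  have hRZ : Tr (R * Z) = (‖Tr (R * Y)‖ : ℂ) := by rw [hZ, mul_smul_comm, Tr_smul, hcY]
  have hRZs : Tr (R * star Z) = (‖Tr (R * Y)‖ : ℂ) := by
    have : star (Z * R) = R * star Z := by rw [star_mul, hp.isSelfAdjoint.star_eq]
    rw [← this, Tr_star, ← Tr_comm hR, hRZ]
    exact Complex.conj_ofReal _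
  have hpos : ((2 * ‖Y‖ : ℝ) : ℂ) • (1 : H →L[ℂ] H) - (Z + star Z) |>.IsPositive := by
    have hsa : IsSelfAdjoint (Z + star Z) := IsSelfAdjoint.add_star_self Z
    refine isPositive_def'.2 ⟨?_, fun x => ?_⟩
    · refine IsSelfAdjoint.sub ?_ hsa
      rw [IsSelfAdjoint, star_smul, star_one, Complex.star_def, Complex.conj_ofReal]
    · rw [reApplyInnerSelf_apply, sub_apply, inner_sub_left, smul_apply, inner_smul_left,
        Complex.conj_ofReal, one_apply_eq_self, inner_self_eq_norm_sq_to_K]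
      have h1 : ‖⟪(Z + star Z) x, x⟫‖ ≤ 2 * ‖Y‖ * ‖x‖ ^ 2 := by
        refine (norm_inner_le_norm _ _).trans ?_
        have h2 : ‖(Z + star Z) x‖ ≤ 2 * ‖Y‖ * ‖x‖ := by
          refine ((Z + star Z).le_opNorm x).trans ?_
          gcongr
          refine (norm_add_le _ _).trans ?_
          rw [norm_star, hZn]; linarith
        calc _ ≤ 2 * ‖Y‖ * ‖x‖ * ‖x‖ := by gcongr
          _ = _ := by ring
      have h3 := (Complex.re_le_norm _).trans h1
      have h4 : (((2 * ‖Y‖ : ℝ) : ℂ) * ((‖x‖ : ℂ)) ^ 2).re = 2 * ‖Y‖ * ‖x‖ ^ 2 := by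
        norm_cast
      simp only [Complex.coe_algebraMap, RCLike.re_eq_complex_re, Complex.sub_re] at *
      linarith
  have h := Tr_mul_nonneg hR hp hpos
  rw [mul_sub, mul_add, mul_smul_comm, mul_one, Tr_sub (tc_smul _ hR)
    (tc_add (tc_mul hR _) (tc_mul hR _)), Tr_add (tc_mul hR _) (tc_mul hR _), hRZ, hRZs, Tr_smul] at h
  have h' := (Complex.le_def.1 h).1
  simp only [Complex.zero_re, Complex.sub_re, Complex.re_ofReal_mul, Complex.add_re,
    Complex.ofReal_re] at h'
  linarith

lemma Tr_mul_rankOne (T : H →L[ℂ] H) (u v : H) : Tr (T * rankOne u v) = ⟪v, T u⟫ := by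
  rw [← (stdONB H).tsum_inner_mul_inner v (T u), Tr]
  refine tsum_congr fun i => ?_
  simp [rankOne, inner_smul_right]

lemma weakStar_repr (w : (H →L[ℂ] H) →L[ℂ] ℂ) (hw : @Continuous _ _ (weakStarTopology H) _ w) :
    ∃ R : H →L[ℂ] H, IsTraceClass R ∧ ∀ Y, w Y = Tr (R * Y) := by
  let f : { X : H →L[ℂ] H // IsTraceClass X } → ((H →L[ℂ] H) →ₗ[ℂ] ℂ) := fun X =>
    { toFun := fun Y => Tr ((X : H →L[ℂ] H) * Y)
      map_add' := fun Y Z => by rw [mul_add, Tr_add (tc_mul X.2 _) (tc_mul X.2 _)]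
      map_smul' := fun c Y => by rw [mul_smul_comm, Tr_smul]; rfl }
  have hspan : (w : (H →L[ℂ] H) →ₗ[ℂ] ℂ) ∈ Submodule.span ℂ (Set.range f) := by
    rw [LinearMap.mem_span_iff_continuous]
    have : weakStarTopology H = ⨅ i, TopologicalSpace.induced (f i) inferInstance := by
      rw [weakStarTopology, ← induced_to_pi]
      rfl
    rw [← this]
    exact hw
  have : ∀ φ ∈ Submodule.span ℂ (Set.range f),
      ∃ R : H →L[ℂ] H, IsTraceClass R ∧ ∀ Y, φ Y = Tr (R * Y) := by
    intro φ hφ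
    induction hφ using Submodule.span_induction with
    | mem x hx => obtain ⟨X, rfl⟩ := hx; exact ⟨X, X.2, fun Y => rfl⟩
    | zero => exact ⟨0, tc_zero, fun Y => by rw [zero_mul, Tr_zero]; rfl⟩
    | add x y _ _ hx hy =>
      obtain ⟨R, hR, h⟩ := hx
      obtain ⟨S, hS, h'⟩ := hy
      exact ⟨R + S, tc_add hR hS, fun Y => by
        rw [add_mul, Tr_add (tc_mul hR _) (tc_mul hS _), ← h, ← h']; rfl⟩
    | smul a x _ hx =>
      obtain ⟨R, hR, h⟩ := hx
      exact ⟨a • R, tc_smul a hR, fun Y => by rw [smul_mul_assoc, Tr_smul, ← h]; rfl⟩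
  exact this _ hspan

lemma isPositive_rankOne (x : H) : (rankOne x x : H →L[ℂ] H).IsPositive := by
  rw [isPositive_iff_complex]
  intro y
  have : ⟪(rankOne x x : H →L[ℂ] H) y, y⟫ = ((‖⟪x, y⟫‖ ^ 2 : ℝ) : ℂ) := by
    simp only [rankOne, comp_apply, innerSL_apply_apply, toSpanSingleton_apply, inner_smul_left]
    rw [← Complex.normSq_eq_conj_mul_self, Complex.normSq_eq_norm_sq]
  rw [this]
  refine ⟨rfl, ?_⟩
  exact sq_nonneg ‖⟪x, y⟫‖

lemma sum_inner_le_Tr {R : H →L[ℂ] H} (hR : IsTraceClass R) (hp : R.IsPositive) {n : ℕ}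
    {e : Fin n → H} (he : Orthonormal ℂ e) : ∑ i, (⟪e i, R (e i)⟫).re ≤ (Tr R).re := by
  have hP : ((1 : H →L[ℂ] H) - ∑ i, rankOne (e i) (e i)).IsPositive := by
    refine isPositive_def'.2 ⟨?_, fun x => ?_⟩
    · exact IsSelfAdjoint.sub (IsSelfAdjoint.one _)
        (isPositive_sum _ fun i _ => isPositive_rankOne (e i)).isSelfAdjoint
    · have h1 := he.sum_inner_products_le x (s := Finset.univ)
      have h2 : ∀ i, (⟪(rankOne (e i) (e i) : H →L[ℂ] H) x, x⟫).re = ‖⟪e i, x⟫‖ ^ 2 := by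
        intro i
        simp only [rankOne, comp_apply, innerSL_apply_apply, toSpanSingleton_apply, inner_smul_left]
        rw [← Complex.normSq_eq_conj_mul_self, Complex.normSq_eq_norm_sq, Complex.ofReal_re]
      rw [reApplyInnerSelf_apply, sub_apply, inner_sub_left, sum_apply, sum_inner,
        one_apply_eq_self, inner_self_eq_norm_sq_to_K]
      simp only [RCLike.re_eq_complex_re, Complex.sub_re, Complex.re_sum, h2]
      have : (((‖x‖ : ℝ) : ℂ) ^ 2).re = ‖x‖ ^ 2 := by norm_cast
      simp only [Complex.coe_algebraMap] at *
      linarith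
  have h := (Complex.le_def.1 (Tr_mul_nonneg hR hp hP)).1
  rw [mul_sub, Finset.mul_sum, mul_one, Tr_sub hR (tc_sum _ fun i => tc_mul hR _),
    Tr_sum _ fun i => tc_mul hR _] at h
  simp only [Tr_mul_rankOne, Complex.sub_re, Complex.re_sum, Complex.zero_re] at h
  linarith

lemma norm_inner_le_of_pos {R : H →L[ℂ] H} (hp : R.IsPositive) (x y : H) :
    ‖⟪x, R y⟫‖ ≤ ((⟪x, R x⟫).re + (⟪y, R y⟫).re) / 2 := by
  obtain ⟨S, hS, hST⟩ : ∃ S : H →L[ℂ] H, IsSelfAdjoint S ∧ S * S = R := by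
    have h0 : 0 ≤ R := (nonneg_iff_isPositive R).2 hp
    exact ⟨CFC.sqrt R, (CFC.sqrt_nonneg R).isSelfAdjoint, CFC.sqrt_mul_sqrt_self R h0⟩
  have key : ∀ x y, ⟪x, R y⟫ = ⟪S x, S y⟫ := by
    intro x y
    rw [← hST, mul_apply_eq_comp, ← adjoint_inner_left, ← star_eq_adjoint, hS.star_eq]
  have key2 : ∀ x, (⟪x, R x⟫).re = ‖S x‖ ^ 2 := by
    intro x
    rw [key, inner_self_eq_norm_sq_to_K]
    norm_cast
  rw [key2, key2, key]
  refine (norm_inner_le_norm _ _).trans ?_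
  nlinarith [sq_nonneg (‖S x‖ - ‖S y‖)]

lemma sum_norm_le_Tr {R : H →L[ℂ] H} (hR : IsTraceClass R) (hp : R.IsPositive) {n : ℕ}
    {e f : Fin n → H} (he : Orthonormal ℂ e) (hf : Orthonormal ℂ f) :
    ∑ i, ‖⟪f i, R (e i)⟫‖ ≤ (Tr R).re := by
  refine (Finset.sum_le_sum fun i _ => norm_inner_le_of_pos hp (f i) (e i)).trans ?_
  rw [← Finset.sum_div, Finset.sum_add_distrib]
  have := sum_inner_le_Tr hR hp he
  have := sum_inner_le_Tr hR hp hf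
  linarith

end helpers

/-- A quantum channel `Φ` on `T(H)` is strongly entanglement breaking
iff the linear functional `Φ̃*` on `B(H) ⊗̂ T(H)` determined by
`Φ̃*(Y ⊗ X) = Tr(Φ*(Y) Xᵗ)` can be written as `Φ̃* = ∑ₖ wₖ ⊗ ρₖ` with `wₖ`
weak*-continuous positive norm-one functionals on `B(H)` and `ρₖ(X) = Tr(Fₖ Xᵗ)` for
positive `Fₖ` with `∑ₖ Fₖ = I` (SOT).  (Since the elementary tensors span a dense
subspace of the projective tensor product, the identity of functionals is expressed by
its values on elementary tensors `Y ⊗ X`.) -/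
theorem SEB_iff_functional_countably_separable
    {H : Type*} [NormedAddCommGroup H] [InnerProductSpace ℂ H] [CompleteSpace H]
    [TopologicalSpace.SeparableSpace H]
    (e : HilbertBasis ℕ ℂ H)
    (Φ : (H →L[ℂ] H) →ₗ[ℂ] (H →L[ℂ] H)) (hΦ : IsChannel Φ)
    (Φs : (H →L[ℂ] H) →ₗ[ℂ] (H →L[ℂ] H))
    (hdual : ∀ (X Y : H →L[ℂ] H), IsTraceClass X → Tr (Φ X * Y) = Tr (X * Φs Y))
    (transp : (H →L[ℂ] H) → (H →L[ℂ] H))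
    (htransp_tc : ∀ X : H →L[ℂ] H, IsTraceClass X → IsTraceClass (transp X))
    (htransp : ∀ X : H →L[ℂ] H, IsTraceClass X →
      ∀ i j, ⟪e i, transp X (e j)⟫ = ⟪e j, X (e i)⟫) :
    IsSEB Φ ↔
    ∃ (w : ℕ → ((H →L[ℂ] H) →L[ℂ] ℂ)) (F : ℕ → (H →L[ℂ] H)),
      (∀ k, @Continuous _ _ (weakStarTopology H) _ (w k)) ∧
      (∀ k, ∀ Y : H →L[ℂ] H, Y.IsPositive → 0 ≤ (w k Y).re ∧ (w k Y).im = 0) ∧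
      (∀ k, ‖w k‖ = 1) ∧
      (∀ k, (F k).IsPositive) ∧
      (∀ x : H, HasSum (fun k => F k x) x) ∧
      (∀ (Y X : H →L[ℂ] H), IsTraceClass X →
        HasSum (fun k => w k Y * Tr (F k * transp X)) (Tr (Φs Y * transp X))) := by
  constructor
  · rintro ⟨R, F, hR, hF, hFs, hsum⟩
    have hone : ∀ k, (Tr (R k)).re = 1 := fun k => by rw [(hR k).2.2]; rfl
    let w : ℕ → ((H →L[ℂ] H) →L[ℂ] ℂ) := fun k => LinearMap.mkContinuous
      { toFun := fun Y => Tr (R k * Y)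
        map_add' := fun Y Z => by rw [mul_add, Tr_add (tc_mul (hR k).1 _) (tc_mul (hR k).1 _)]
        map_smul' := fun c Y => by rw [mul_smul_comm, Tr_smul]; rfl } 1
      (fun Y => by
        have := norm_Tr_mul_le_of_pos (hR k).1 (hR k).2.1 Y
        rw [hone] at this
        exact this)
    have hw : ∀ k Y, w k Y = Tr (R k * Y) := fun k Y => rfl
    refine ⟨w, F, ?_, ?_, ?_, hF, hFs, ?_⟩
    · intro k
      have h1 : @Continuous _ _ (weakStarTopology H) _
          (fun Y => fun X : { X : H →L[ℂ] H // IsTraceClass X } => Tr ((X : H →L[ℂ] H) * Y)) :=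
        continuous_induced_dom
      have h2 : Continuous (fun p : { X : H →L[ℂ] H // IsTraceClass X } → ℂ =>
          p ⟨R k, (hR k).1⟩) := continuous_apply _
      have h3 := @Continuous.comp _ _ _ (weakStarTopology H) _ _ _ _ h2 h1
      exact h3
    · intro k Y hY
      have := Complex.le_def.1 (Tr_mul_nonneg (hR k).1 (hR k).2.1 hY)
      exact ⟨this.1, this.2.symm⟩
    · intro k
      refine le_antisymm (LinearMap.mkContinuous_norm_le _ zero_le_one _) ?_
      have h1 : w k 1 = 1 := by rw [hw, mul_one, (hR k).2.2]
      have h2 := (w k).le_opNorm 1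
      rw [h1, norm_one] at h2
      have h3 : ‖(1 : H →L[ℂ] H)‖ ≤ 1 := ContinuousLinearMap.norm_id_le
      nlinarith [norm_nonneg (w k)]
    · intro Y X hX
      have hZ := htransp_tc X hX
      set Z := transp X
      rw [← Tr_comm hZ, ← hdual Z Y hZ]
      obtain ⟨C, hC⟩ := norm_Tr_mul_le Y
      have hconv := hsum Z hZ
      rw [HasSum, SummationFilter.unconditional_filter, tendsto_iff_norm_sub_tendsto_zero]
      have h0 : Filter.Tendsto (fun s : Finset ℕ =>
          C * traceNorm (Φ Z - ∑ k ∈ s, Tr (F k * Z) • R k)) atTop (𝓝 0) := by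
        simpa using hconv.const_mul C
      refine squeeze_zero (fun _ => norm_nonneg _) (fun s => ?_) h0
      have htc : IsTraceClass (∑ k ∈ s, Tr (F k * Z) • R k) :=
        tc_sum s fun k => tc_smul _ (hR k).1
      have htc' := hΦ.maps_traceClass Z hZ
      refine le_trans (le_of_eq ?_) (hC _ (tc_sub htc' htc))
      rw [sub_mul, Tr_sub (tc_mul htc' _) (tc_mul htc _), Finset.sum_mul,
        Tr_sum _ fun k => tc_mul (tc_smul _ (hR k).1) _, norm_sub_rev]
      congr 2
      refine Finset.sum_congr rfl fun k _ => ?_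
      rw [smul_mul_assoc, Tr_smul, hw, mul_comm]
  · rintro ⟨w, F, hwc, hwp, hwn, hF, hFs, hsum⟩
    choose R hR hRw using fun k => weakStar_repr (w k) (hwc k)
    have hpos : ∀ k, (R k).IsPositive := by
      intro k
      rw [isPositive_iff_complex]
      intro x
      have h1 := hwp k _ (isPositive_rankOne x)
      rw [hRw, Tr_mul_rankOne] at h1
      have h2 : (⟪R k x, x⟫).re = (⟪x, R k x⟫).re := by
        rw [← inner_conj_symm, Complex.conj_re]
      have h3 : (⟪R k x, x⟫).im = 0 := by
        rw [← inner_conj_symm, Complex.conj_im, h1.2, neg_zero]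
      refine ⟨Complex.ext rfl ?_, ?_⟩
      · exact h3.symm
      · exact h1.1.trans_eq h2.symm
    have htr : ∀ k, Tr (R k) = 1 := by
      intro k
      have h0 : w k 1 = Tr (R k) := by rw [hRw, mul_one]
      have hnn := hwp k 1 isPositive_one
      rw [h0] at hnn
      have hle : (Tr (R k)).re ≤ 1 := by
        refine (Complex.re_le_norm _).trans ?_
        rw [← h0]
        refine ((w k).le_opNorm 1).trans ?_
        rw [hwn, one_mul]
        exact ContinuousLinearMap.norm_id_le
      have hge : 1 ≤ (Tr (R k)).re := by
        rw [← hwn k]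
        refine ContinuousLinearMap.opNorm_le_bound _ hnn.1 fun Y => ?_
        rw [hRw]
        exact norm_Tr_mul_le_of_pos (hR k) (hpos k) Y
      exact Complex.ext (le_antisymm hle hge) hnn.2
    refine ⟨R, F, fun k => ⟨hR k, hpos k, htr k⟩, hF, hFs, fun X hX => ?_⟩
    -- `X` is the transpose of its transpose
    have hXX : transp (transp X) = X := by
      have h := htransp _ (htransp_tc X hX)
      refine ContinuousLinearMap.ext_on (s := Set.range e)
        (Submodule.dense_iff_topologicalClosure_eq_top.2 e.dense_span) ?_
      rintro _ ⟨j, rfl⟩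
      refine e.repr.injective ?_
      ext i
      rw [e.repr_apply_apply, e.repr_apply_apply, h, htransp X hX]
    have hs : ∀ Y, HasSum (fun k => Tr (R k * Y) * Tr (F k * X)) (Tr (Φ X * Y)) := by
      intro Y
      have := hsum Y (transp X) (htransp_tc X hX)
      rw [hXX, ← Tr_comm hX, ← hdual X Y hX] at this
      simpa only [hRw] using this
    have hsm : Summable (fun k => ‖Tr (F k * X)‖) := by
      have := (hs 1).summable
      simp only [mul_one, htr, one_mul] at this
      exact this.norm
    have htail : Filter.Tendsto (fun s : Finset ℕ =>
        (∑' k, ‖Tr (F k * X)‖) - ∑ k ∈ s, ‖Tr (F k * X)‖) atTop (𝓝 0) := by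
      have h := hsm.hasSum
      rw [HasSum, SummationFilter.unconditional_filter] at h
      simpa using h.const_sub (∑' k, ‖Tr (F k * X)‖)
    refine squeeze_zero (fun _ => traceNorm_nonneg _) (fun s => ?_) htail
    refine traceNorm_le fun n a b ha hb => ?_
    have hsi : ∀ i, HasSum (fun k => Tr (F k * X) * ⟪b i, R k (a i)⟫) ⟪b i, Φ X (a i)⟫ := by
      intro i
      have := hs (rankOne (a i) (b i))
      simp only [Tr_mul_rankOne] at this
      simpa only [mul_comm] using this
    have hdiff : ∀ i, HasSum (fun k : { k // k ∉ s } => Tr (F k * X) * ⟪b i, R k (a i)⟫)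
        ⟪b i, (Φ X - ∑ k ∈ s, Tr (F k * X) • R k) (a i)⟫ := by
      intro i
      have h := (s.hasSum_compl_iff (f := fun k => Tr (F k * X) * ⟪b i, R k (a i)⟫)
        (a := ⟪b i, (Φ X - ∑ k ∈ s, Tr (F k * X) • R k) (a i)⟫)).2
      refine h ?_
      have heq : ⟪b i, (Φ X - ∑ k ∈ s, Tr (F k * X) • R k) (a i)⟫
          + ∑ k ∈ s, Tr (F k * X) * ⟪b i, R k (a i)⟫ = ⟪b i, Φ X (a i)⟫ := by
        rw [sub_apply, inner_sub_right, sum_apply, inner_sum]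
        simp only [smul_apply, inner_smul_right, sub_add_cancel]
      rw [heq]
      exact hsi i
    have hsmc : Summable (fun k : { k // k ∉ s } => ‖Tr (F k * X)‖) :=
      hsm.comp_injective Subtype.val_injective
    have hpt : ∀ k, ∑ i, ‖⟪b i, R k (a i)⟫‖ ≤ 1 := by
      intro k
      have := sum_norm_le_Tr (hR k) (hpos k) ha hb
      rwa [htr] at this
    have hle1 : ∀ i k, ‖⟪b i, R k (a i)⟫‖ ≤ 1 := fun i k =>
      (Finset.single_le_sum (f := fun i => ‖⟪b i, R k (a i)⟫‖) (fun _ _ => norm_nonneg _)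
        (Finset.mem_univ i)).trans (hpt k)
    have hsn : ∀ i, Summable (fun k : { k // k ∉ s } => ‖Tr (F k * X) * ⟪b i, R k (a i)⟫‖) := by
      intro i
      refine hsmc.of_nonneg_of_le (fun _ => norm_nonneg _) fun k => ?_
      rw [norm_mul]
      exact mul_le_of_le_one_right (norm_nonneg _) (hle1 i k)
    calc ∑ i, ‖⟪b i, (Φ X - ∑ k ∈ s, Tr (F k * X) • R k) (a i)⟫‖
        ≤ ∑ i, ∑' k : { k // k ∉ s }, ‖Tr (F k * X) * ⟪b i, R k (a i)⟫‖ := by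
          refine Finset.sum_le_sum fun i _ => ?_
          rw [← (hdiff i).tsum_eq]
          exact norm_tsum_le_tsum_norm (hsn i)
      _ = ∑' k : { k // k ∉ s }, ∑ i, ‖Tr (F k * X) * ⟪b i, R k (a i)⟫‖ :=
          (Summable.tsum_finsetSum fun i _ => hsn i).symm
      _ ≤ ∑' k : { k // k ∉ s }, ‖Tr (F k * X)‖ := by
          refine Summable.tsum_le_tsum (fun k => ?_) (summable_sum fun i _ => hsn i) hsmc
          simp only [norm_mul]
          rw [← Finset.mul_sum]
          exact mul_le_of_le_one_right (norm_nonneg _) (hpt k)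
      _ = _ := by
          rw [← hsm.sum_add_tsum_subtype_compl s]
          simp

end
end
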